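/- arXiv:1201.1073 — 2 statements merged into one kernel-verified Lean document; each statement's English description precedes it below -/
import Mathlib

section
/- Let Ω be a non-empty closed discrete subset of ℂ which is stable under addition (ω₁, ω₂ ∈ Ω implies ω₁ + ω₂ ∈ Ω). Then for any two Ω-continuable germs φ̂, ψ̂ ∈ R̂_Ω, the convolution product φ̂ * ψ̂ is again Ω-continuable, i.e. φ̂ * ψ̂ ∈ R̂_Ω. -/
open Set Metric Filter Topology intervalIntegral

noncomputable section

/-- A path `γ : [a,b] → ℂ` which is piecewise `C¹`. -/
def PiecewiseC1On (γ : ℝ → ℂ) (a b : ℝ) : Prop :=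
  ContinuousOn γ (Set.Icc a b) ∧
  ∃ (n : ℕ) (u : ℕ → ℝ), u 0 = a ∧ u n = b ∧ (∀ i < n, u i ≤ u (i + 1)) ∧
    ∀ i < n, ContDiffOn ℝ 1 γ (Set.Icc (u i) (u (i + 1)))

/-- The germ at `γ a` of the function `f` admits analytic continuation along
`γ` restricted to `[a,b]`, resulting in the germ of `g` at `γ b`.  This is the
usual definition via a family of analytic elements `(F t, r t)` along the path
which are locally compatible. -/
def ContAlong (f : ℂ → ℂ) (γ : ℝ → ℂ) (a b : ℝ) (g : ℂ → ℂ) : Prop :=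
  ∃ (F : ℝ → ℂ → ℂ) (r : ℝ → ℝ),
    (∀ t ∈ Set.Icc a b, 0 < r t ∧ AnalyticOnNhd ℂ (F t) (Metric.ball (γ t) (r t))) ∧
    (∀ t ∈ Set.Icc a b, ∃ ε > 0, ∀ t' ∈ Set.Icc a b, |t' - t| < ε →
      Set.EqOn (F t) (F t') (Metric.ball (γ t) (r t) ∩ Metric.ball (γ t') (r t'))) ∧
    (∀ᶠ z in 𝓝 (γ a), F a z = f z) ∧
    (∀ᶠ z in 𝓝 (γ b), F b z = g z)

/-- The germ of `f` at `γ a` admits analytic continuation along `γ|[a,b]`. -/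
def ContinuableAlong (f : ℂ → ℂ) (γ : ℝ → ℂ) (a b : ℝ) : Prop :=
  ∃ g, ContAlong f γ a b g

/-- `f` is an `Ω`-continuable holomorphic germ at `0`: it is holomorphic on some
disc `D_R` with `D_R∖{0}` disjoint from `Ω`, and admits analytic continuation
along every (piecewise `C¹`) path of `ℂ∖Ω` originating from any point of `D_R∖{0}`. -/
def OmegaCont (Ω : Set ℂ) (f : ℂ → ℂ) : Prop :=
  ∃ R > 0, AnalyticOnNhd ℂ f (Metric.ball 0 R) ∧
    (∀ ζ ∈ Metric.ball (0:ℂ) R, ζ ≠ 0 → ζ ∉ Ω) ∧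
    ∀ γ : ℝ → ℂ, PiecewiseC1On γ 0 1 → γ 0 ∈ Metric.ball (0:ℂ) R → γ 0 ≠ 0 →
      (∀ t ∈ Set.Icc (0:ℝ) 1, γ t ∉ Ω) → ContinuableAlong f γ 0 1

/-- Convolution of two germs: `(f ⋆ g)(ζ) = ∫₀^ζ f(ξ) g(ζ-ξ) dξ`, the integral
being taken over the line segment from `0` to `ζ`. -/
def conv (f g : ℂ → ℂ) (ζ : ℂ) : ℂ :=
  ζ * ∫ t in (0:ℝ)..1, f ((t : ℂ) * ζ) * g ((1 - (t : ℂ)) * ζ)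

/-!
Near `0` the convolution at `ζ` is the integral of `f ξ * g (ζ - ξ)` over the segment from `0` to
`ζ`. To continue it along a path with moving end point `c`, one keeps a broken line from `0` to `c`
together with branches of `f` at its vertices `z` and of `g` at the points `c - z`; the convolution
at `ζ` near `c` is the integral over this line, prolonged by the segment from `c` to `ζ`. When `c`
moves to `c'`, the vertices are dragged along by `Φ z = z + θ z * (c' - c)`, where
`θ z = d(z, Ω) / (d(z, Ω) + d(c - z, Ω))`. Stability of `Ω` under addition bounds the denominator
from below by `d(c, Ω) > 0`. Since `θ` vanishes on `Ω`, the line stays off `Ω`, and the symmetry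
`c' - Φ z = Φ (c - z)` gives the same for the argument of `g`. The distances to `Ω` shrink at most
by a factor which is exponential in the length of the path of `c`, so that the radii of the
analytic elements stay bounded from below. By Cauchy's theorem for the small quadrilaterals between
the old and the new line, the two integrals agree near `c`.
-/

section Continuation

theorem Icc_forward_induction {a b : ℝ} (hab : a ≤ b) {P : ℝ → Prop} (ha : P a)
    (h : ∀ t ∈ Icc a b, ∃ V ∈ 𝓝[Icc a b] t, ∀ s u, s ≤ u → Icc s u ⊆ V → P s → P u) : P b := by
  choose! V hV hP using h
  have hmem (t : Icc a b) : t ∈ interior ((↑) ⁻¹' V t : Set (Icc a b)) := by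
    rw [mem_interior_iff_mem_nhds, nhds_subtype_eq_comap_nhdsWithin]
    exact preimage_mem_comap (hV t t.2)
  obtain ⟨τ, hτ0, hτ, ⟨m, hm⟩, hτV⟩ := exists_monotone_Icc_subset_open_cover_Icc hab
    (fun _ ↦ isOpen_interior) fun t _ ↦ mem_iUnion.2 ⟨t, hmem t⟩
  have hPτ (n : ℕ) : P (τ n) := by
    induction n with
    | zero => rwa [hτ0]
    | succ n ih =>
      obtain ⟨t, ht⟩ := hτV n
      refine hP t t.2 _ _ (hτ n.le_succ) (fun v hv ↦ ?_) ih
      have hv' : v ∈ Icc a b := ⟨(τ n).2.1.trans hv.1, hv.2.trans (τ (n + 1)).2.2⟩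
      have : (⟨v, hv'⟩ : Icc a b) ∈ Subtype.val ⁻¹' V t := interior_subset (ht hv)
      exact this
  have := hPτ m
  rwa [hm m le_rfl] at this

theorem eqOn_ball_inter_ball {x y p : ℂ} {r s : ℝ} {F G : ℂ → ℂ}
    (hF : AnalyticOnNhd ℂ F (ball x r)) (hG : AnalyticOnNhd ℂ G (ball y s)) (hx : p ∈ ball x r)
    (hy : p ∈ ball y s) (h : F =ᶠ[𝓝 p] G) : EqOn F G (ball x r ∩ ball y s) :=
  (hF.mono inter_subset_left).eqOn_of_preconnected_of_eventuallyEq (hG.mono inter_subset_right)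
    ((convex_ball x r).inter (convex_ball y s)).isPreconnected ⟨hx, hy⟩ h

theorem eventuallyEq_of_eqOn_ball_inter_ball {x y p : ℂ} {r s : ℝ} {F G : ℂ → ℂ}
    (h : EqOn F G (ball x r ∩ ball y s)) (hx : p ∈ ball x r) (hy : p ∈ ball y s) : F =ᶠ[𝓝 p] G :=
  h.eventuallyEq_of_mem ((isOpen_ball.inter isOpen_ball).mem_nhds ⟨hx, hy⟩)

/-- A locally compatible family of analytic elements `(F t, r t)` along `γ` on `[a, b]`, as in the
definition of `ContAlong`. -/
structure IsContFamily (F : ℝ → ℂ → ℂ) (r : ℝ → ℝ) (γ : ℝ → ℂ) (a b : ℝ) : Prop where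
  pos : ∀ t ∈ Icc a b, 0 < r t
  analyticOnNhd : ∀ t ∈ Icc a b, AnalyticOnNhd ℂ (F t) (ball (γ t) (r t))
  eventually_eqOn : ∀ t ∈ Icc a b,
    ∀ᶠ t' in 𝓝[Icc a b] t, EqOn (F t) (F t') (ball (γ t) (r t) ∩ ball (γ t') (r t'))

variable {F F' : ℝ → ℂ → ℂ} {r r' : ℝ → ℝ} {γ γ' : ℝ → ℂ} {f f' g g' φ : ℂ → ℂ} {a b c : ℝ}

theorem contAlong_iff : ContAlong f γ a b g ↔
    ∃ F r, IsContFamily F r γ a b ∧ F a =ᶠ[𝓝 (γ a)] f ∧ F b =ᶠ[𝓝 (γ b)] g := by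
  have key (t : ℝ) (Q : ℝ → Prop) : (∃ ε > 0, ∀ t' ∈ Icc a b, |t' - t| < ε → Q t') ↔
      ∀ᶠ t' in 𝓝[Icc a b] t, Q t' := by
    simp only [eventually_nhdsWithin_iff, Metric.eventually_nhds_iff, Real.dist_eq]
    exact exists_congr fun ε ↦ and_congr_right fun _ ↦ forall_congr' fun _ ↦ forall_comm
  refine exists_congr fun F ↦ exists_congr fun r ↦ ?_
  simp only [key]
  exact ⟨fun ⟨h₁, h₂, ha, hb⟩ ↦ ⟨⟨fun t ht ↦ (h₁ t ht).1, fun t ht ↦ (h₁ t ht).2, h₂⟩, ha, hb⟩,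
    fun ⟨h, ha, hb⟩ ↦ ⟨fun t ht ↦ ⟨h.pos t ht, h.analyticOnNhd t ht⟩, h.eventually_eqOn, ha, hb⟩⟩

namespace IsContFamily

theorem mono (h : IsContFamily F r γ a b) {a' b' : ℝ} (hs : Icc a' b' ⊆ Icc a b) :
    IsContFamily F r γ a' b' where
  pos t ht := h.pos t (hs ht)
  analyticOnNhd t ht := h.analyticOnNhd t (hs ht)
  eventually_eqOn t ht := (h.eventually_eqOn t (hs ht)).filter_mono (nhdsWithin_mono t hs)

theorem congr (h : IsContFamily F r γ a b) (hr : ∀ t ∈ Icc a b, 0 < r' t)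
    (hr' : ∀ t ∈ Icc a b, r' t ≤ r t)
    (hF : ∀ t ∈ Icc a b, EqOn (F t) (F' t) (ball (γ t) (r' t))) : IsContFamily F' r' γ a b where
  pos := hr
  analyticOnNhd t ht :=
    ((h.analyticOnNhd t ht).mono (ball_subset_ball (hr' t ht))).congr isOpen_ball (hF t ht)
  eventually_eqOn t ht := by
    filter_upwards [h.eventually_eqOn t ht, self_mem_nhdsWithin] with t' htt' ht' z hz
    rw [← hF t ht hz.1, ← hF t' ht' hz.2]
    exact htt' ⟨ball_subset_ball (hr' t ht) hz.1, ball_subset_ball (hr' t' ht') hz.2⟩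

theorem union (h₁ : IsContFamily F r γ a b) (h₂ : IsContFamily F r γ b c) :
    IsContFamily F r γ a c := by
  have hs : Icc a c ⊆ Icc a b ∪ Icc b c := Icc_subset_Icc_union_Icc
  refine ⟨fun t ht ↦ (hs ht).elim (h₁.pos t) (h₂.pos t),
    fun t ht ↦ (hs ht).elim (h₁.analyticOnNhd t) (h₂.analyticOnNhd t), fun t _ ↦ ?_⟩
  have piece {x y : ℝ} (h : IsContFamily F r γ x y) : ∀ᶠ t' in 𝓝[Icc x y] t,
      EqOn (F t) (F t') (ball (γ t) (r t) ∩ ball (γ t') (r t')) := by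
    by_cases ht : t ∈ Icc x y
    · exact h.eventually_eqOn t ht
    · rw [notMem_closure_iff_nhdsWithin_eq_bot.1 (by rwa [isClosed_Icc.closure_eq])]
      exact eventually_bot
  refine Eventually.filter_mono (nhdsWithin_mono t hs) ?_
  rw [nhdsWithin_union]
  exact eventually_sup.2 ⟨piece h₁, piece h₂⟩

theorem comp {σ : ℝ → ℝ} {x y : ℝ} (h : IsContFamily F r γ a b) (hσ : ContinuousOn σ (Icc x y))
    (hm : MapsTo σ (Icc x y) (Icc a b)) (hγ' : ∀ t ∈ Icc x y, γ' t = γ (σ t)) :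
    IsContFamily (F ∘ σ) (r ∘ σ) γ' x y where
  pos t ht := h.pos _ (hm ht)
  analyticOnNhd t ht := by rw [hγ' t ht]; exact h.analyticOnNhd _ (hm ht)
  eventually_eqOn t ht := by
    filter_upwards [(hσ t ht).tendsto_nhdsWithin hm (h.eventually_eqOn _ (hm ht)),
      self_mem_nhdsWithin] with t' htt' ht'
    rw [hγ' t ht, hγ' t' ht']
    exact htt'

theorem eventuallyEq_of_analyticAt (h : IsContFamily F r γ a b) (hab : a ≤ b)
    (hγ : ContinuousOn γ (Icc a b)) (hφ : ∀ t ∈ Icc a b, AnalyticAt ℂ φ (γ t))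
    (h₀ : F a =ᶠ[𝓝 (γ a)] φ) : F b =ᶠ[𝓝 (γ b)] φ := by
  refine Icc_forward_induction hab (P := fun t ↦ F t =ᶠ[𝓝 (γ t)] φ) h₀ fun t ht ↦ ?_
  obtain ⟨ρ, hρ, hφρ⟩ := (hφ t ht).exists_ball_analyticOnNhd
  have hnear : ∀ᶠ s in 𝓝[Icc a b] t, γ s ∈ ball (γ t) (r t) ∩ ball (γ t) ρ :=
    hγ t ht (inter_mem (ball_mem_nhds _ (h.pos t ht)) (ball_mem_nhds _ hρ))
  refine ⟨_, inter_mem (inter_mem self_mem_nhdsWithin hnear) (h.eventually_eqOn t ht), ?_⟩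
  intro s u hsu hV hs
  obtain ⟨⟨hs', hsr, hsρ⟩, hts⟩ := hV (left_mem_Icc.2 hsu)
  obtain ⟨⟨hu', hur, huρ⟩, htu⟩ := hV (right_mem_Icc.2 hsu)
  have hFs : F t =ᶠ[𝓝 (γ s)] F s :=
    eventuallyEq_of_eqOn_ball_inter_ball hts hsr (mem_ball_self (h.pos s hs'))
  have hFu : F t =ᶠ[𝓝 (γ u)] F u :=
    eventuallyEq_of_eqOn_ball_inter_ball htu hur (mem_ball_self (h.pos u hu'))
  have hFφ : EqOn (F t) φ (ball (γ t) (r t) ∩ ball (γ t) ρ) :=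
    eqOn_ball_inter_ball (h.analyticOnNhd t ht) hφρ hsr hsρ (hFs.trans hs)
  exact hFu.symm.trans (eventuallyEq_of_eqOn_ball_inter_ball hFφ hur huρ)

end IsContFamily

theorem contAlong_self (h : ∀ t ∈ Icc a b, AnalyticAt ℂ f (γ t)) : ContAlong f γ a b f := by
  choose! r hr hf using fun t ht ↦ (h t ht).exists_ball_analyticOnNhd
  exact contAlong_iff.2 ⟨fun _ ↦ f, r, ⟨hr, hf, fun t _ ↦ .of_forall fun _ ↦ eqOn_refl _ _⟩,
    .rfl, .rfl⟩

namespace ContAlong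

theorem congr_left (h : ContAlong f γ a b g) (hf : f =ᶠ[𝓝 (γ a)] f') : ContAlong f' γ a b g := by
  obtain ⟨F, r, hF, ha, hb⟩ := contAlong_iff.1 h
  exact contAlong_iff.2 ⟨F, r, hF, ha.trans hf, hb⟩

theorem congr_right (h : ContAlong f γ a b g) (hg : g =ᶠ[𝓝 (γ b)] g') : ContAlong f γ a b g' := by
  obtain ⟨F, r, hF, ha, hb⟩ := contAlong_iff.1 h
  exact contAlong_iff.2 ⟨F, r, hF, ha, hb.trans hg⟩

theorem analyticAt_left (h : ContAlong f γ a b g) (hab : a ≤ b) : AnalyticAt ℂ f (γ a) := by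
  obtain ⟨F, r, hF, ha, -⟩ := contAlong_iff.1 h
  have ha' := left_mem_Icc.2 hab
  exact (hF.analyticOnNhd a ha' _ (mem_ball_self (hF.pos a ha'))).congr ha

theorem analyticAt_right (h : ContAlong f γ a b g) (hab : a ≤ b) : AnalyticAt ℂ g (γ b) := by
  obtain ⟨F, r, hF, -, hb⟩ := contAlong_iff.1 h
  have hb' := right_mem_Icc.2 hab
  exact (hF.analyticOnNhd b hb' _ (mem_ball_self (hF.pos b hb'))).congr hb

theorem comp {σ : ℝ → ℝ} {x y : ℝ} (h : ContAlong f γ (σ x) (σ y) g) (hxy : x ≤ y)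
    (hσ : ContinuousOn σ (Icc x y)) (hm : MapsTo σ (Icc x y) (Icc (σ x) (σ y)))
    (hγ' : ∀ t ∈ Icc x y, γ' t = γ (σ t)) : ContAlong f γ' x y g := by
  obtain ⟨F, r, hF, ha, hb⟩ := contAlong_iff.1 h
  rw [← hγ' x (left_mem_Icc.2 hxy)] at ha
  rw [← hγ' y (right_mem_Icc.2 hxy)] at hb
  exact contAlong_iff.2 ⟨F ∘ σ, r ∘ σ, hF.comp hσ hm hγ', ha, hb⟩

theorem split (h : ContAlong f γ a c g) (hb : b ∈ Icc a c) :
    ∃ k, ContAlong f γ a b k ∧ ContAlong k γ b c g := by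
  obtain ⟨F, r, hF, ha, hc⟩ := contAlong_iff.1 h
  exact ⟨F b, contAlong_iff.2 ⟨F, r, hF.mono (Icc_subset_Icc_right hb.2), ha, .rfl⟩,
    contAlong_iff.2 ⟨F, r, hF.mono (Icc_subset_Icc_left hb.1), .rfl, hc⟩⟩

theorem trans (h₁ : ContAlong f γ a b φ) (h₂ : ContAlong φ γ b c g) (hb : b ∈ Icc a c) :
    ContAlong f γ a c g := by
  obtain ⟨F₁, r₁, hF₁, ha₁, hb₁⟩ := contAlong_iff.1 h₁
  obtain ⟨F₂, r₂, hF₂, hb₂, hc₂⟩ := contAlong_iff.1 h₂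
  have hpos₁ := hF₁.pos b (right_mem_Icc.2 hb.1)
  have hpos₂ := hF₂.pos b (left_mem_Icc.2 hb.2)
  obtain ⟨ρ, hρ, hEq⟩ := Metric.eventually_nhds_iff_ball.1 (hb₁.trans hb₂.symm)
  let F : ℝ → ℂ → ℂ := fun t ↦ if t ≤ b then F₁ t else F₂ t
  let r : ℝ → ℝ := fun t ↦ if t < b then r₁ t else if b < t then r₂ t else
    min ρ (min (r₁ b) (r₂ b))
  have hr : r b = min ρ (min (r₁ b) (r₂ b)) := by simp [r]
  have hF₁' : IsContFamily F r γ a b := by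
    refine hF₁.congr (fun t ht ↦ ?_) (fun t ht ↦ ?_) fun t ht ↦ ?_
    · rcases ht.2.lt_or_eq with h | rfl
      · simpa [r, h] using hF₁.pos t ht
      · simp [hr, hρ, hpos₁, hpos₂]
    · rcases ht.2.lt_or_eq with h | rfl
      · simp [r, h]
      · simp [hr]
    · simp only [F, ht.2, if_true]
      exact eqOn_refl _ _
  have hF₂' : IsContFamily F r γ b c := by
    refine hF₂.congr (fun t ht ↦ ?_) (fun t ht ↦ ?_) fun t ht ↦ ?_
    · rcases ht.1.lt_or_eq with h | rfl
      · simpa [r, h, h.not_gt] using hF₂.pos t ht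
      · simp [hr, hρ, hpos₁, hpos₂]
    · rcases ht.1.lt_or_eq with h | rfl
      · simp [r, h, h.not_gt]
      · simp [hr]
    · rcases ht.1.lt_or_eq with h | rfl
      · simp only [F, h.not_ge, if_false]
        exact eqOn_refl _ _
      · simp only [F, le_refl, if_true]
        exact fun z hz ↦ (hEq z (ball_subset_ball (hr.trans_le (min_le_left _ _)) hz)).symm
  refine contAlong_iff.2 ⟨F, r, hF₁'.union hF₂', by simpa [F, hb.1] using ha₁, ?_⟩
  rcases hb.2.lt_or_eq with h | rfl
  · simpa [F, h.not_ge] using hc₂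
  · simpa [F] using hb₁.trans (hb₂.symm.trans hc₂)

theorem eventuallyEq_of_analyticAt (h : ContAlong f γ a b g) (hab : a ≤ b)
    (hγ : ContinuousOn γ (Icc a b)) (hf : ∀ t ∈ Icc a b, AnalyticAt ℂ f (γ t)) :
    g =ᶠ[𝓝 (γ b)] f := by
  obtain ⟨F, r, hF, ha, hb⟩ := contAlong_iff.1 h
  exact hb.symm.trans (hF.eventuallyEq_of_analyticAt hab hγ hf ha)

end ContAlong

/-- Every continuation of `f` along a path `ε`-close to `γ` with the same origin leads to the
germ of `g`. -/
def IsStable (f : ℂ → ℂ) (γ : ℝ → ℂ) (a b : ℝ) (g : ℂ → ℂ) (ε : ℝ) : Prop :=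
  ∀ γ' g', ContinuousOn γ' (Icc a b) → γ' a = γ a → (∀ t ∈ Icc a b, dist (γ' t) (γ t) < ε) →
    ContAlong f γ' a b g' → g' =ᶠ[𝓝 (γ' b)] g

theorem isStable_self {ε : ℝ} (hg : g =ᶠ[𝓝 (γ a)] f) : IsStable f γ a a g ε := by
  intro γ' g' _ h₀ _ h'
  obtain ⟨F, r, -, ha, hb⟩ := contAlong_iff.1 h'
  rw [h₀] at ha hb ⊢
  exact hb.symm.trans (ha.trans hg.symm)

namespace IsStable

theorem exists_congr_right {ε : ℝ} (h : IsStable f γ a b g ε) (hε : 0 < ε) (hab : a ≤ b)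
    (hg : g =ᶠ[𝓝 (γ b)] g') : ∃ ε' > 0, IsStable f γ a b g' ε' := by
  obtain ⟨ρ, hρ, hgρ⟩ := Metric.eventually_nhds_iff_ball.1 (eventually_eventually_nhds.2 hg)
  refine ⟨min ε ρ, lt_min hε hρ, fun γ' k hγ' h₀ hd hk ↦ ?_⟩
  exact (h γ' k hγ' h₀ (fun t ht ↦ (hd t ht).trans_le (min_le_left _ _)) hk).trans
    (hgρ _ ((hd b (right_mem_Icc.2 hab)).trans_le (min_le_right _ _)))

theorem exists_of_analyticOnNhd {ε ρ : ℝ} {x : ℂ} (h : IsStable f γ a b g ε) (hε : 0 < ε)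
    (hg : AnalyticOnNhd ℂ g (ball x ρ)) (hab : a ≤ b) (hbc : b ≤ c)
    (hγ : ∀ t ∈ Icc b c, γ t ∈ ball x (ρ / 2)) : ∃ ε' > 0, IsStable f γ a c g ε' := by
  have hρ : 0 < ρ / 2 := pos_of_mem_ball (hγ b (left_mem_Icc.2 hbc))
  refine ⟨min ε (ρ / 2), lt_min hε hρ, fun γ' g' hγ' h₀ hd h' ↦ ?_⟩
  simp only [lt_min_iff] at hd
  obtain ⟨k, hk, hk'⟩ := h'.split ⟨hab, hbc⟩
  have hsub : Icc a b ⊆ Icc a c := Icc_subset_Icc_right hbc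
  have hsub' : Icc b c ⊆ Icc a c := Icc_subset_Icc_left hab
  have hkg : k =ᶠ[𝓝 (γ' b)] g :=
    h γ' k (hγ'.mono hsub) h₀ (fun t ht ↦ (hd t (hsub ht)).1) hk
  refine (hk'.congr_left hkg).eventuallyEq_of_analyticAt hbc (hγ'.mono hsub') fun t ht ↦ hg _ ?_
  exact (dist_triangle _ (γ t) _).trans_lt
    (by linarith [(hd t (hsub' ht)).2, mem_ball.1 (hγ t ht)])

end IsStable

namespace ContAlong

theorem exists_isStable (h : ContAlong f γ a b g) (hab : a ≤ b) (hγ : ContinuousOn γ (Icc a b)) :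
    ∃ ε > 0, IsStable f γ a b g ε := by
  obtain ⟨F, r, hF, ha, hb⟩ := contAlong_iff.1 h
  suffices ∃ ε > 0, IsStable f γ a b (F b) ε by
    obtain ⟨ε, hε, H⟩ := this
    exact H.exists_congr_right hε hab hb
  refine Icc_forward_induction hab (P := fun t ↦ ∃ ε > 0, IsStable f γ a t (F t) ε)
    ⟨1, one_pos, isStable_self ha⟩ fun t ht ↦ ?_
  have hnear : ∀ᶠ s in 𝓝[Icc a b] t, γ s ∈ ball (γ t) (r t / 2) :=
    hγ t ht (ball_mem_nhds _ (half_pos (hF.pos t ht)))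
  refine ⟨_, inter_mem (inter_mem self_mem_nhdsWithin hnear) (hF.eventually_eqOn t ht), ?_⟩
  rintro s u hsu hV ⟨ε, hε, hs⟩
  have hball : ball (γ t) (r t / 2) ⊆ ball (γ t) (r t) :=
    ball_subset_ball (half_le_self (hF.pos t ht).le)
  obtain ⟨⟨hs', hsr⟩, hts⟩ := hV (left_mem_Icc.2 hsu)
  obtain ⟨⟨hu', hur⟩, htu⟩ := hV (right_mem_Icc.2 hsu)
  have hFs : F t =ᶠ[𝓝 (γ s)] F s :=
    eventuallyEq_of_eqOn_ball_inter_ball hts (hball hsr) (mem_ball_self (hF.pos s hs'))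
  have hFu : F t =ᶠ[𝓝 (γ u)] F u :=
    eventuallyEq_of_eqOn_ball_inter_ball htu (hball hur) (mem_ball_self (hF.pos u hu'))
  obtain ⟨ε₁, hε₁, h₁⟩ := hs.exists_congr_right hε hs'.1 hFs.symm
  obtain ⟨ε₂, hε₂, h₂⟩ := h₁.exists_of_analyticOnNhd hε₁ (hF.analyticOnNhd t ht) hs'.1 hsu
    fun v hv ↦ (hV hv).1.2
  exact h₂.exists_congr_right hε₂ hu'.1 hFu

theorem unique (h : ContAlong f γ a b g) (h' : ContAlong f γ a b g') (hab : a ≤ b)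
    (hγ : ContinuousOn γ (Icc a b)) : g' =ᶠ[𝓝 (γ b)] g := by
  obtain ⟨ε, hε, H⟩ := h.exists_isStable hab hγ
  exact H γ g' hγ rfl (fun t _ ↦ by simpa using hε) h'

end ContAlong

theorem exists_analyticOnNhd_ball_of_continuableAlong {z : ℂ} {d : ℝ} (hd : 0 < d)
    (h : ∀ u ∈ ball z d, ContinuableAlong φ (fun t ↦ AffineMap.lineMap z u t) 0 1) :
    ∃ E, AnalyticOnNhd ℂ E (ball z d) ∧ E =ᶠ[𝓝 z] φ := by
  choose! k hk using h
  have hpath (u : ℂ) : ContinuousOn (fun t : ℝ ↦ AffineMap.lineMap z u t) (Icc (0 : ℝ) 1) :=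
    AffineMap.lineMap_continuous.continuousOn
  have hloc (u : ℂ) (hu : u ∈ ball z d) : (fun v ↦ k v v) =ᶠ[𝓝 u] k u := by
    obtain ⟨ε, hε, H⟩ := (hk u hu).exists_isStable zero_le_one (hpath u)
    filter_upwards [ball_mem_nhds u hε, isOpen_ball.mem_nhds hu] with v hvε hv
    have hdist : ∀ t ∈ Icc (0 : ℝ) 1,
        dist (AffineMap.lineMap z v t) (AffineMap.lineMap z u t) < ε := fun t ht ↦ by
      have h₁ : AffineMap.lineMap z v t - AffineMap.lineMap z u t = (t : ℂ) * (v - u) := by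
        simp only [AffineMap.lineMap_apply_module', Complex.real_smul]
        ring
      rw [dist_eq_norm, h₁, norm_mul, Complex.norm_of_nonneg ht.1, ← dist_eq_norm]
      exact (mul_le_of_le_one_left dist_nonneg ht.2).trans_lt hvε
    simpa using (H _ _ (hpath v) (by simp) hdist (hk v hv)).self_of_nhds
  refine ⟨fun v ↦ k v v, fun u hu ↦ ?_, ?_⟩
  · have := (hk u hu).analyticAt_right zero_le_one
    rw [AffineMap.lineMap_apply_one] at this
    exact this.congr (hloc u hu).symm
  · have hkz := hk z (mem_ball_self hd)
    have hφ := hkz.analyticAt_left zero_le_one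
    have := hkz.eventuallyEq_of_analyticAt zero_le_one (hpath z)
      fun t _ ↦ by simpa using hφ
    exact (hloc z (mem_ball_self hd)).trans (by simpa using this)

end Continuation

section Paths

variable {γ γ' γ₁ γ₂ : ℝ → ℂ} {a b c : ℝ}

theorem le_of_forall_le_succ {n : ℕ} {u : ℕ → ℝ} (h : ∀ i < n, u i ≤ u (i + 1)) {i j : ℕ}
    (hij : i ≤ j) (hj : j ≤ n) : u i ≤ u j := by
  induction j, hij using Nat.le_induction with
  | base => exact le_rfl
  | succ j _ ih => exact (ih (by omega)).trans (h j (by omega))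

theorem lipschitzOnWith_Icc_union {X : Type*} [PseudoMetricSpace X] {φ : ℝ → X} {K₁ K₂ : NNReal}
    (h₁ : LipschitzOnWith K₁ φ (Icc a b)) (h₂ : LipschitzOnWith K₂ φ (Icc b c)) :
    LipschitzOnWith (max K₁ K₂) φ (Icc a c) := by
  replace h₁ := h₁.weaken (le_max_left K₁ K₂)
  replace h₂ := h₂.weaken (le_max_right K₁ K₂)
  refine LipschitzOnWith.of_dist_le_mul fun x hx y hy ↦ ?_
  wlog hxy : x ≤ y generalizing x y
  · rw [dist_comm (φ x), dist_comm x]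
    exact this y hy x hx (le_of_not_ge hxy)
  rcases le_total y b with hyb | hby
  · exact h₁.dist_le_mul x ⟨hx.1, hxy.trans hyb⟩ y ⟨hy.1, hyb⟩
  rcases le_total b x with hbx | hxb
  · exact h₂.dist_le_mul x ⟨hbx, hx.2⟩ y ⟨hby, hy.2⟩
  calc dist (φ x) (φ y) ≤ dist (φ x) (φ b) + dist (φ b) (φ y) := dist_triangle _ _ _
    _ ≤ max K₁ K₂ * dist x b + max K₁ K₂ * dist b y :=
      add_le_add (h₁.dist_le_mul x ⟨hx.1, hxb⟩ b ⟨hx.1.trans hxb, le_rfl⟩)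
        (h₂.dist_le_mul b ⟨le_rfl, hby.trans hy.2⟩ y ⟨hby, hy.2⟩)
    _ = max K₁ K₂ * dist x y := by
      rw [← mul_add, Real.dist_eq, Real.dist_eq, Real.dist_eq, abs_of_nonpos (sub_nonpos.2 hxb),
        abs_of_nonpos (sub_nonpos.2 hby), abs_of_nonpos (sub_nonpos.2 hxy)]
      ring

namespace PiecewiseC1On

theorem of_contDiffOn (h : ContDiffOn ℝ 1 γ (Icc a b)) (hab : a ≤ b) : PiecewiseC1On γ a b :=
  ⟨h.continuousOn, 1, fun i ↦ if i = 0 then a else b, by simp, by simp, by simp [hab], by simpa⟩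

theorem congr (h : PiecewiseC1On γ a b) (hγ : EqOn γ' γ (Icc a b)) : PiecewiseC1On γ' a b := by
  obtain ⟨hc, n, u, rfl, rfl, hu, hC⟩ := h
  refine ⟨hc.congr hγ, n, u, rfl, rfl, hu, fun i hi ↦ (hC i hi).congr (hγ.mono ?_)⟩
  exact Icc_subset_Icc (le_of_forall_le_succ hu i.zero_le hi.le) (le_of_forall_le_succ hu hi le_rfl)

theorem comp_mul_add {m q : ℝ} (h : PiecewiseC1On γ (m * a + q) (m * b + q)) (hm : 0 < m) :
    PiecewiseC1On (fun t ↦ γ (m * t + q)) a b := by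
  obtain ⟨hc, n, u, hu₀, hun, hu, hC⟩ := h
  have hmaps : MapsTo (fun t ↦ m * t + q) (Icc a b) (Icc (m * a + q) (m * b + q)) := fun t ht ↦
    ⟨by dsimp only; gcongr; exact ht.1, by dsimp only; gcongr; exact ht.2⟩
  refine ⟨hc.comp (by fun_prop) hmaps, n,
    fun i ↦ (u i - q) / m, by simp [hu₀, hm.ne'], by simp [hun, hm.ne'], fun i hi ↦ ?_,
    fun i hi ↦ (hC i hi).comp (by fun_prop) fun t ht ↦ ?_⟩
  · have := hu i hi
    dsimp only
    gcongr
  · rw [mem_Icc, div_le_iff₀ hm, le_div_iff₀ hm] at ht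
    constructor <;> linarith

theorem trans (h₁ : PiecewiseC1On γ a b) (h₂ : PiecewiseC1On γ b c) : PiecewiseC1On γ a c := by
  obtain ⟨hc₁, n₁, u, rfl, rfl, hu, hC₁⟩ := h₁
  obtain ⟨hc₂, n₂, v, hv₀, rfl, hv, hC₂⟩ := h₂
  have hu_le := le_of_forall_le_succ hu (Nat.zero_le n₁) le_rfl
  have hv_le := le_of_forall_le_succ hv (Nat.zero_le n₂) le_rfl
  have hcont := hc₁.union_of_isClosed hc₂ isClosed_Icc isClosed_Icc
  rw [Icc_union_Icc_eq_Icc hu_le (hv₀ ▸ hv_le)] at hcont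
  let w : ℕ → ℝ := fun i ↦ if i ≤ n₁ then u i else v (i - n₁)
  have hw₁ {i : ℕ} (hi : i ≤ n₁) : w i = u i := if_pos hi
  have hw₂ (i : ℕ) : w (n₁ + i) = v i := by
    rcases i.eq_zero_or_pos with rfl | hi
    · rw [add_zero, hw₁ le_rfl, hv₀]
    · simp [w, hi.ne']
  have key {Q : ℝ → ℝ → Prop} (hQ₁ : ∀ i < n₁, Q (u i) (u (i + 1)))
      (hQ₂ : ∀ i < n₂, Q (v i) (v (i + 1))) (i : ℕ) (hi : i < n₁ + n₂) : Q (w i) (w (i + 1)) := by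
    rcases lt_or_ge i n₁ with hi₁ | hi₁
    · rw [hw₁ hi₁.le, hw₁ hi₁]
      exact hQ₁ i hi₁
    · obtain ⟨j, rfl⟩ := Nat.exists_eq_add_of_le hi₁
      rw [hw₂, add_assoc, hw₂]
      exact hQ₂ j (by omega)
  exact ⟨hcont, n₁ + n₂, w, hw₁ n₁.zero_le, hw₂ n₂, key hu hv,
    key (Q := fun x y ↦ ContDiffOn ℝ 1 γ (Icc x y)) hC₁ hC₂⟩

theorem exists_lipschitzOnWith (h : PiecewiseC1On γ a b) :
    ∃ K, LipschitzOnWith K γ (Icc a b) := by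
  obtain ⟨-, n, u, rfl, rfl, -, hC⟩ := h
  induction n with
  | zero => exact ⟨0, by simp⟩
  | succ n ih =>
    obtain ⟨K₁, h₁⟩ := ih fun i hi ↦ hC i (by omega)
    obtain ⟨K₂, h₂⟩ := (hC n n.lt_succ_self).exists_lipschitzOnWith one_ne_zero (convex_Icc _ _)
      isCompact_Icc
    exact ⟨_, lipschitzOnWith_Icc_union h₁ h₂⟩

end PiecewiseC1On

theorem piecewiseC1On_lineMap (z w : ℂ) :
    PiecewiseC1On (fun t ↦ AffineMap.lineMap z w t) 0 1 := by
  refine .of_contDiffOn (ContDiff.contDiffOn ?_) zero_le_one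
  simp only [AffineMap.lineMap_apply_module']
  fun_prop

/-- Concatenation of two paths parametrised by `[0, 1]`; meant for `γ₁ 1 = γ₂ 0`. -/
def concat (γ₁ γ₂ : ℝ → ℂ) (t : ℝ) : ℂ :=
  if t ≤ 1 / 2 then γ₁ (2 * t) else γ₂ (2 * t - 1)

theorem concat_of_le {t : ℝ} (ht : t ≤ 1 / 2) : concat γ₁ γ₂ t = γ₁ (2 * t) := if_pos ht

theorem concat_of_ge (h : γ₁ 1 = γ₂ 0) {t : ℝ} (ht : 1 / 2 ≤ t) :
    concat γ₁ γ₂ t = γ₂ (2 * t - 1) := by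
  rcases ht.eq_or_lt with rfl | ht
  · simpa [concat] using h
  · exact if_neg ht.not_ge

theorem concat_zero : concat γ₁ γ₂ 0 = γ₁ 0 := by simp [concat]

theorem concat_one (h : γ₁ 1 = γ₂ 0) : concat γ₁ γ₂ 1 = γ₂ 1 := by
  rw [concat_of_ge h (by norm_num)]
  norm_num

theorem forall_concat (h : γ₁ 1 = γ₂ 0) {s : Set ℂ} (h₁ : ∀ t ∈ Icc (0 : ℝ) 1, γ₁ t ∈ s)
    (h₂ : ∀ t ∈ Icc (0 : ℝ) 1, γ₂ t ∈ s) : ∀ t ∈ Icc (0 : ℝ) 1, concat γ₁ γ₂ t ∈ s := by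
  intro t ht
  rcases le_total t (1 / 2) with hle | hle
  · rw [concat_of_le hle]
    exact h₁ _ ⟨by linarith [ht.1], by linarith⟩
  · rw [concat_of_ge h hle]
    exact h₂ _ ⟨by linarith, by linarith [ht.2]⟩

theorem PiecewiseC1On.concat (h₁ : PiecewiseC1On γ₁ 0 1) (h₂ : PiecewiseC1On γ₂ 0 1)
    (h : γ₁ 1 = γ₂ 0) : PiecewiseC1On (concat γ₁ γ₂) 0 1 := by
  have h₁' : PiecewiseC1On (fun t ↦ γ₁ (2 * t + 0)) 0 (1 / 2) :=
    comp_mul_add (by simpa using h₁) two_pos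
  have h₂' : PiecewiseC1On (fun t ↦ γ₂ (2 * t + -1)) (1 / 2) 1 :=
    comp_mul_add (by norm_num; exact h₂) two_pos
  exact (h₁'.congr fun t ht ↦ by rw [concat_of_le ht.2, add_zero]).trans
    (h₂'.congr fun t ht ↦ concat_of_ge h ht.1)

theorem ContAlong.of_concat {f g : ℂ → ℂ} (h : ContAlong f (concat γ₁ γ₂) 0 1 g)
    (h₁₂ : γ₁ 1 = γ₂ 0) : ∃ k, ContAlong f γ₁ 0 1 k ∧ ContAlong k γ₂ 0 1 g := by
  obtain ⟨k, hk₁, hk₂⟩ := h.split (b := 1 / 2) ⟨by norm_num, by norm_num⟩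
  refine ⟨k, ContAlong.comp (σ := fun t ↦ t / 2) (by simpa using hk₁) zero_le_one (by fun_prop)
    (fun t ht ↦ ?_) fun t ht ↦ ?_, ContAlong.comp (σ := fun t ↦ (t + 1) / 2)
    (by norm_num; simpa using hk₂) zero_le_one (by fun_prop) (fun t ht ↦ ?_) fun t ht ↦ ?_⟩
  · constructor <;> linarith [ht.1, ht.2]
  · rw [concat_of_le (by linarith [ht.2])]
    ring_nf
  · constructor <;> linarith [ht.1, ht.2]
  · rw [concat_of_ge h₁₂ (by linarith [ht.1])]
    ring_nf

end Paths

section Branches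

variable {Ω : Set ℂ} {R : ℝ} {f φ : ℂ → ℂ} {z w : ℂ}

/-- `f` is `Ω`-continuable, with the disc `D_R` as a witness. -/
structure IsOmegaContOn (Ω : Set ℂ) (R : ℝ) (f : ℂ → ℂ) : Prop where
  analyticOnNhd : AnalyticOnNhd ℂ f (ball 0 R)
  notMem : ∀ ζ ∈ ball (0 : ℂ) R, ζ ≠ 0 → ζ ∉ Ω
  continuableAlong : ∀ γ : ℝ → ℂ, PiecewiseC1On γ 0 1 → γ 0 ∈ ball (0 : ℂ) R → γ 0 ≠ 0 →
    (∀ t ∈ Icc (0 : ℝ) 1, γ t ∉ Ω) → ContinuableAlong f γ 0 1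

theorem omegaCont_iff : OmegaCont Ω f ↔ ∃ R > 0, IsOmegaContOn Ω R f :=
  exists_congr fun _ ↦ and_congr_right fun _ ↦
    ⟨fun ⟨h₁, h₂, h₃⟩ ↦ ⟨h₁, h₂, h₃⟩, fun h ↦ ⟨h.1, h.2, h.3⟩⟩

theorem IsOmegaContOn.mono {R' : ℝ} (h : IsOmegaContOn Ω R f) (hR : R' ≤ R) :
    IsOmegaContOn Ω R' f where
  analyticOnNhd := h.analyticOnNhd.mono (ball_subset_ball hR)
  notMem ζ hζ := h.notMem ζ (ball_subset_ball hR hζ)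
  continuableAlong γ hγ h₀ := h.continuableAlong γ hγ (ball_subset_ball hR h₀)

/-- The germ of `φ` at `z` is obtained from `f` by analytic continuation along a path in `ℂ ∖ Ω`
issued from the punctured disc of radius `R`: it is a branch of `f` at `z`. -/
def IsBranchAt (Ω : Set ℂ) (R : ℝ) (f : ℂ → ℂ) (z : ℂ) (φ : ℂ → ℂ) : Prop :=
  ∃ γ : ℝ → ℂ, PiecewiseC1On γ 0 1 ∧ γ 0 ∈ ball (0 : ℂ) R ∧ γ 0 ≠ 0 ∧
    (∀ t ∈ Icc (0 : ℝ) 1, γ t ∈ Ωᶜ) ∧ γ 1 = z ∧ ContAlong f γ 0 1 φ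

theorem IsOmegaContOn.isBranchAt (hf : IsOmegaContOn Ω R f) (hw : w ∈ ball 0 R) (hwΩ : w ∉ Ω) :
    IsBranchAt Ω R f w f := by
  obtain ⟨p, hp, hp0, hpw⟩ : ∃ p ∈ ball (0 : ℂ) R, p ≠ 0 ∧
      ∀ t ∈ Icc (0 : ℝ) 1, AffineMap.lineMap p w t ∈ Ωᶜ := by
    by_cases hw0 : w = 0
    · have hR : 0 < R := pos_of_mem_ball hw
      have hp : (R / 2 : ℂ) ∈ ball (0 : ℂ) R := by
        rw [mem_ball_zero_iff, norm_div, Complex.norm_of_nonneg hR.le]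
        norm_num
        exact hR
      refine ⟨R / 2, hp, by simp [hR.ne'], fun t ht ↦ ?_⟩
      by_cases h : AffineMap.lineMap (R / 2 : ℂ) w t = 0
      · rwa [h, ← hw0]
      · exact hf.notMem _ ((convex_ball 0 R).lineMap_mem hp hw ht) h
    · exact ⟨w, hw, hw0, by simpa using fun _ _ _ ↦ hwΩ⟩
  refine ⟨_, piecewiseC1On_lineMap p w, by simpa using hp, by simpa using hp0, hpw, by simp,
    contAlong_self fun t ht ↦ hf.analyticOnNhd _ ?_⟩
  exact (convex_ball 0 R).lineMap_mem hp hw ht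

namespace IsBranchAt

theorem notMem (h : IsBranchAt Ω R f z φ) : z ∉ Ω := by
  obtain ⟨γ, -, -, -, hγΩ, rfl, -⟩ := h
  exact hγΩ 1 (right_mem_Icc.2 zero_le_one)

theorem congr {φ' : ℂ → ℂ} (h : IsBranchAt Ω R f z φ) (hφ : φ =ᶠ[𝓝 z] φ') :
    IsBranchAt Ω R f z φ' := by
  obtain ⟨γ, hγ, h₀, h₀', hγΩ, rfl, hφγ⟩ := h
  exact ⟨γ, hγ, h₀, h₀', hγΩ, rfl, hφγ.congr_right hφ⟩

theorem exists_contAlong_lineMap (h : IsBranchAt Ω R f z φ) (hf : IsOmegaContOn Ω R f)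
    (hzw : ∀ t ∈ Icc (0 : ℝ) 1, AffineMap.lineMap z w t ∈ Ωᶜ) :
    ∃ g, ContAlong φ (fun t ↦ AffineMap.lineMap z w t) 0 1 g ∧ IsBranchAt Ω R f w g := by
  obtain ⟨γ, hγ, h₀, h₀', hγΩ, rfl, hφ⟩ := h
  have h₁₂ : γ 1 = AffineMap.lineMap (γ 1) w (0 : ℝ) := by simp
  have hcat := hγ.concat (piecewiseC1On_lineMap (γ 1) w) h₁₂
  have hcatΩ := forall_concat h₁₂ hγΩ hzw
  rw [← concat_zero (γ₁ := γ)] at h₀ h₀'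
  obtain ⟨g, hg⟩ := hf.continuableAlong _ hcat h₀ h₀' hcatΩ
  obtain ⟨k, hk, hkg⟩ := hg.of_concat h₁₂
  refine ⟨g, hkg.congr_left ?_, _, hcat, h₀, h₀', hcatΩ, ?_, hg⟩
  · simpa using hφ.unique hk zero_le_one hγ.1
  · simpa using concat_one h₁₂

theorem of_analyticOnNhd {s : Set ℂ} (h : IsBranchAt Ω R f z φ) (hf : IsOmegaContOn Ω R f)
    (hs : Convex ℝ s) (hsΩ : s ⊆ Ωᶜ) (hφ : AnalyticOnNhd ℂ φ s) (hz : z ∈ s) (hw : w ∈ s) :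
    IsBranchAt Ω R f w φ := by
  have hmem : ∀ t ∈ Icc (0 : ℝ) 1, AffineMap.lineMap z w t ∈ s := fun t ↦ hs.lineMap_mem hz hw
  obtain ⟨g, hg, hgw⟩ := h.exists_contAlong_lineMap hf fun t ht ↦ hsΩ (hmem t ht)
  have := hg.eventuallyEq_of_analyticAt zero_le_one (piecewiseC1On_lineMap z w).1
    fun t ht ↦ hφ _ (hmem t ht)
  exact hgw.congr (by simpa using this)

theorem exists_analyticOnNhd_ball (h : IsBranchAt Ω R f z φ) (hf : IsOmegaContOn Ω R f)
    (hne : Ω.Nonempty) (hcl : IsClosed Ω) :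
    ∃ E, AnalyticOnNhd ℂ E (ball z (infDist z Ω)) ∧ E =ᶠ[𝓝 z] φ ∧
      ∀ w ∈ ball z (infDist z Ω), IsBranchAt Ω R f w E := by
  have hd : 0 < infDist z Ω := (hcl.notMem_iff_infDist_pos hne).1 h.notMem
  have hz := mem_ball_self hd (x := z)
  obtain ⟨E, hE, hEφ⟩ := exists_analyticOnNhd_ball_of_continuableAlong hd fun u hu ↦ by
    obtain ⟨g, hg, -⟩ := h.exists_contAlong_lineMap hf (w := u) fun t ht ↦
      ball_infDist_subset_compl ((convex_ball _ _).lineMap_mem hz hu ht)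
    exact ⟨g, hg⟩
  exact ⟨E, hE, hEφ, fun w ↦ (h.congr hEφ.symm).of_analyticOnNhd hf (convex_ball _ _)
    ball_infDist_subset_compl hE hz⟩

end IsBranchAt

end Branches

section Integrals

variable {z w : ℂ}

theorem analyticOnNhd_intervalIntegral {E : Type*} [NormedAddCommGroup E] [NormedSpace ℂ E]
    [CompleteSpace E] {a b : ℝ} (hab : a ≤ b) {W : Set ℂ} (hW : IsOpen W) {k k' : ℂ → ℝ → E}
    (hk : ContinuousOn (Function.uncurry k) (W ×ˢ Icc a b))
    (hk' : ContinuousOn (Function.uncurry k') (W ×ˢ Icc a b))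
    (hd : ∀ ζ ∈ W, ∀ t ∈ Icc a b, HasDerivAt (k · t) (k' ζ t) ζ) :
    AnalyticOnNhd ℂ (fun ζ ↦ ∫ t in a..b, k ζ t) W := by
  refine DifferentiableOn.analyticOnNhd (fun ζ₀ hζ₀ ↦ ?_) hW
  obtain ⟨ε, hε, hball⟩ := Metric.nhds_basis_closedBall.mem_iff.1 (hW.mem_nhds hζ₀)
  obtain ⟨C, hC⟩ := ((isCompact_closedBall ζ₀ ε).prod isCompact_Icc).exists_bound_of_continuousOn
    (hk'.mono (prod_mono_left hball))
  have hsub : uIoc a b ⊆ Icc a b := by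
    rw [uIoc_of_le hab]
    exact Ioc_subset_Icc_self
  have hint {q : ℂ → ℝ → E} (hq : ContinuousOn (Function.uncurry q) (W ×ˢ Icc a b)) (ζ : ℂ)
      (hζ : ζ ∈ W) : IntervalIntegrable (q ζ) MeasureTheory.volume a b := by
    refine ContinuousOn.intervalIntegrable ?_
    rw [uIcc_of_le hab]
    exact hq.comp (f := fun t ↦ (ζ, t)) (by fun_prop) fun t ht ↦ ⟨hζ, ht⟩
  have := hasDerivAt_integral_of_dominated_loc_of_deriv_le (closedBall_mem_nhds ζ₀ hε)
    (bound := fun _ ↦ C) ((hW.eventually_mem hζ₀).mono fun ζ hζ ↦ (hint hk ζ hζ).def'.1)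
    (hint hk ζ₀ hζ₀) (hint hk' ζ₀ hζ₀).def'.1
    (.of_forall fun t ht ζ hζ ↦ hC (ζ, t) ⟨hζ, hsub ht⟩) intervalIntegrable_const
    (.of_forall fun t ht ζ hζ ↦ hd ζ (hball hζ) t (hsub ht))
  exact this.2.differentiableAt.differentiableWithinAt

/-- The integral of `h` over the straight segment from `z` to `w`. -/
def segIntegral (h : ℂ → ℂ) (z w : ℂ) : ℂ :=
  (w - z) * ∫ t in (0 : ℝ)..1, h (AffineMap.lineMap z w t)

@[simp]
theorem segIntegral_self (h : ℂ → ℂ) (z : ℂ) : segIntegral h z z = 0 := by simp [segIntegral]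

theorem segIntegral_congr {s : Set ℂ} (hs : Convex ℝ s) {h h' : ℂ → ℂ} (heq : EqOn h h' s)
    (hz : z ∈ s) (hw : w ∈ s) : segIntegral h z w = segIntegral h' z w := by
  refine congrArg _ (integral_congr fun t ht ↦ heq (hs.lineMap_mem hz hw ?_))
  rwa [uIcc_of_le zero_le_one] at ht

theorem exists_segIntegral_eq_sub {x : ℂ} {ρ : ℝ} {h : ℂ → ℂ}
    (hh : DifferentiableOn ℂ h (ball x ρ)) :
    ∃ P : ℂ → ℂ, ∀ z ∈ ball x ρ, ∀ w ∈ ball x ρ, segIntegral h z w = P w - P z := by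
  obtain ⟨P, hP⟩ := hh.isExactOn_ball
  refine ⟨P, fun z hz w hw ↦ ?_⟩
  have hmem : ∀ t ∈ uIcc (0 : ℝ) 1, AffineMap.lineMap z w t ∈ ball x ρ := fun t ht ↦
    (convex_ball x ρ).lineMap_mem hz hw (by rwa [uIcc_of_le zero_le_one] at ht)
  have hcont : ContinuousOn (fun t : ℝ ↦ h (AffineMap.lineMap z w t)) (uIcc 0 1) :=
    hh.continuousOn.comp AffineMap.lineMap_continuous.continuousOn hmem
  have hderiv : ∀ t ∈ uIcc (0 : ℝ) 1, HasDerivAt (fun t : ℝ ↦ P (AffineMap.lineMap z w t))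
      (h (AffineMap.lineMap z w t) * (w - z)) t := fun t ht ↦
    (hP _ (hmem t ht)).comp t AffineMap.hasDerivAt_lineMap
  have := integral_eq_sub_of_hasDerivAt hderiv (hcont.mul continuousOn_const).intervalIntegrable
  rw [integral_mul_const] at this
  simpa [segIntegral, mul_comm] using this

/-- The integrand `ξ ↦ F ξ * G (ζ - ξ)` of the convolution at `ζ`. -/
def convKernel (F G : ℂ → ℂ) (ζ ξ : ℂ) : ℂ :=
  F ξ * G (ζ - ξ)

theorem conv_eq_segIntegral (f g : ℂ → ℂ) (ζ : ℂ) :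
    conv f g ζ = segIntegral (convKernel f g ζ) 0 ζ := by
  simp only [conv, segIntegral, convKernel, sub_zero, AffineMap.lineMap_apply_module', add_zero,
    Complex.real_smul, sub_mul, one_mul]

theorem analyticOnNhd_convKernel {F G : ℂ → ℂ} {U V s : Set ℂ} {ζ : ℂ}
    (hF : AnalyticOnNhd ℂ F U) (hG : AnalyticOnNhd ℂ G V) (hU : s ⊆ U)
    (hV : ∀ ξ ∈ s, ζ - ξ ∈ V) : AnalyticOnNhd ℂ (convKernel F G ζ) s :=
  (hF.mono hU).mul fun ξ hξ ↦ (hG _ (hV ξ hξ)).comp (analyticAt_const.sub analyticAt_id)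

theorem analyticOnNhd_segIntegral_convKernel {F G b : ℂ → ℂ} {U V W : Set ℂ} (hW : IsOpen W)
    (hF : AnalyticOnNhd ℂ F U) (hG : AnalyticOnNhd ℂ G V) (hb : AnalyticOnNhd ℂ b W)
    (hU : ∀ ζ ∈ W, ∀ t ∈ Icc (0 : ℝ) 1, AffineMap.lineMap z (b ζ) t ∈ U)
    (hV : ∀ ζ ∈ W, ∀ t ∈ Icc (0 : ℝ) 1, ζ - AffineMap.lineMap z (b ζ) t ∈ V) :
    AnalyticOnNhd ℂ (fun ζ ↦ segIntegral (convKernel F G ζ) z (b ζ)) W := by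
  let L : ℂ → ℝ → ℂ := fun ζ t ↦ AffineMap.lineMap z (b ζ) t
  have hL_eq (ζ : ℂ) (t : ℝ) : L ζ t = t * (b ζ - z) + z := by
    simp [L, AffineMap.lineMap_apply_module']
  have hL : ContinuousOn (Function.uncurry L) (W ×ˢ Icc 0 1) := by
    have : ContinuousOn (fun p : ℂ × ℝ ↦ b p.1) (W ×ˢ Icc 0 1) :=
      hb.continuousOn.comp continuousOn_fst fun p hp ↦ hp.1
    simp only [Function.uncurry_def, hL_eq]
    exact (ContinuousOn.mul (by fun_prop) (this.sub continuousOn_const)).add continuousOn_const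
  have hb' : ContinuousOn (fun p : ℂ × ℝ ↦ (p.2 : ℂ) * deriv b p.1) (W ×ˢ Icc 0 1) :=
    ContinuousOn.mul (by fun_prop) (hb.deriv.continuousOn.comp continuousOn_fst fun p hp ↦ hp.1)
  have hL' : ContinuousOn (fun p : ℂ × ℝ ↦ p.1 - L p.1 p.2) (W ×ˢ Icc 0 1) :=
    continuousOn_fst.sub hL
  have hLU : MapsTo (Function.uncurry L) (W ×ˢ Icc 0 1) U := fun p hp ↦ hU _ hp.1 _ hp.2
  have hLV : MapsTo (fun p : ℂ × ℝ ↦ p.1 - L p.1 p.2) (W ×ˢ Icc 0 1) V :=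
    fun p hp ↦ hV _ hp.1 _ hp.2
  refine (hb.sub analyticOnNhd_const).mul (analyticOnNhd_intervalIntegral zero_le_one hW
    (k' := fun ζ t ↦ deriv F (L ζ t) * (t * deriv b ζ) * G (ζ - L ζ t) +
      F (L ζ t) * (deriv G (ζ - L ζ t) * (1 - t * deriv b ζ))) ?_ ?_ fun ζ hζ t ht ↦ ?_)
  · exact (hF.continuousOn.comp hL hLU).mul (hG.continuousOn.comp hL' hLV)
  · exact (((hF.deriv.continuousOn.comp hL hLU).mul hb').mul (hG.continuousOn.comp hL' hLV)).add
      ((hF.continuousOn.comp hL hLU).mul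
        ((hG.deriv.continuousOn.comp hL' hLV).mul (continuousOn_const.sub hb')))
  · have hLd : HasDerivAt (fun ζ ↦ L ζ t) (t * deriv b ζ) ζ := by
      simp only [hL_eq]
      exact (((hb ζ hζ).differentiableAt.hasDerivAt.sub_const z).const_mul _).add_const z
    exact ((hF _ (hU ζ hζ t ht)).differentiableAt.hasDerivAt.comp ζ hLd).mul
      ((hG _ (hV ζ hζ t ht)).differentiableAt.hasDerivAt.comp ζ ((hasDerivAt_id ζ).sub hLd))

theorem analyticOnNhd_conv {f g : ℂ → ℂ} {R : ℝ} (hf : AnalyticOnNhd ℂ f (ball 0 R))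
    (hg : AnalyticOnNhd ℂ g (ball 0 R)) : AnalyticOnNhd ℂ (conv f g) (ball 0 R) := by
  have hmem {ζ : ℂ} (hζ : ζ ∈ ball 0 R) {t : ℝ} (ht : t ∈ Icc (0 : ℝ) 1) :
      AffineMap.lineMap 0 ζ t ∈ ball (0 : ℂ) R :=
    (convex_ball 0 R).lineMap_mem (mem_ball_self (pos_of_mem_ball hζ)) hζ ht
  rw [funext (conv_eq_segIntegral f g)]
  refine analyticOnNhd_segIntegral_convKernel isOpen_ball hf hg analyticOnNhd_id
    (fun ζ hζ t ht ↦ hmem hζ ht) fun ζ hζ t ht ↦ ?_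
  have : ζ - AffineMap.lineMap 0 ζ t = AffineMap.lineMap 0 ζ (1 - t) := by
    simp [AffineMap.lineMap_apply_module', sub_mul]
  simpa only [id, this] using hmem hζ (Icc.one_sub_mem ht)

/-- The sum of the integrals of `K j` over `[z j, z (j + 1)]`, `j < n`, and of `K n` over
`[z n, ζ]`. -/
def polylineIntegral (n : ℕ) (K : ℕ → ℂ → ℂ) (z : ℕ → ℂ) (ζ : ℂ) : ℂ :=
  ∑ j ∈ Finset.range n, segIntegral (K j) (z j) (z (j + 1)) + segIntegral (K n) (z n) ζ

theorem polylineIntegral_const {x ζ : ℂ} {ρ : ℝ} {n : ℕ} {K : ℂ → ℂ} {z : ℕ → ℂ}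
    (hK : DifferentiableOn ℂ K (ball x ρ)) (hz : ∀ j ≤ n, z j ∈ ball x ρ) (hζ : ζ ∈ ball x ρ) :
    polylineIntegral n (fun _ ↦ K) z ζ = segIntegral K (z 0) ζ := by
  obtain ⟨P, hP⟩ := exists_segIntegral_eq_sub hK
  have hsum : ∑ j ∈ Finset.range n, segIntegral K (z j) (z (j + 1)) = P (z n) - P (z 0) := by
    rw [← Finset.sum_range_sub (fun j ↦ P (z j))]
    refine Finset.sum_congr rfl fun j hj ↦ ?_
    have := Finset.mem_range.1 hj
    exact hP _ (hz _ (by omega)) _ (hz _ (by omega))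
  rw [polylineIntegral, hsum, hP _ (hz n le_rfl) _ hζ, hP _ (hz 0 n.zero_le) _ hζ]
  ring

theorem polylineIntegral_eq_of_eqOn {ρ : ℝ} {n : ℕ} {K K' : ℕ → ℂ → ℂ} {z w : ℕ → ℂ} {ζ : ℂ}
    (hK : ∀ j ≤ n, DifferentiableOn ℂ (K j) (ball (z j) ρ))
    (hKsucc : ∀ j < n, EqOn (K j) (K (j + 1)) (ball (z j) ρ))
    (hK' : ∀ j ≤ n, EqOn (K' j) (K j) (ball (z j) ρ))
    (hz : ∀ j < n, z (j + 1) ∈ ball (z j) ρ) (hw : ∀ j ≤ n, w j ∈ ball (z j) ρ)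
    (hwsucc : ∀ j < n, w (j + 1) ∈ ball (z j) ρ) (hw₀ : w 0 = z 0) (hζ : ζ ∈ ball (z n) ρ) :
    polylineIntegral n K' w ζ = polylineIntegral n K z ζ := by
  have hz_self (j : ℕ) (hj : j ≤ n) : z j ∈ ball (z j) ρ :=
    mem_ball_self (pos_of_mem_ball (hw j hj))
  have hlink : ∀ j < n, segIntegral (K' j) (w j) (w (j + 1)) -
      segIntegral (K j) (z j) (z (j + 1)) =
      segIntegral (K (j + 1)) (z (j + 1)) (w (j + 1)) - segIntegral (K j) (z j) (w j) := by
    intro j hj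
    obtain ⟨P, hP⟩ := exists_segIntegral_eq_sub (hK j hj.le)
    rw [segIntegral_congr (convex_ball _ _) (hK' j hj.le) (hw j hj.le) (hwsucc j hj),
      ← segIntegral_congr (convex_ball _ _) (hKsucc j hj) (hz j hj) (hwsucc j hj),
      hP _ (hw j hj.le) _ (hwsucc j hj), hP _ (hz_self j hj.le) _ (hz j hj),
      hP _ (hz j hj) _ (hwsucc j hj), hP _ (hz_self j hj.le) _ (hw j hj.le)]
    ring
  have hsum : ∑ j ∈ Finset.range n, segIntegral (K' j) (w j) (w (j + 1)) -
      ∑ j ∈ Finset.range n, segIntegral (K j) (z j) (z (j + 1)) =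
      segIntegral (K n) (z n) (w n) := by
    rw [← Finset.sum_sub_distrib, Finset.sum_congr rfl fun j hj ↦ hlink j (Finset.mem_range.1 hj),
      Finset.sum_range_sub (fun j ↦ segIntegral (K j) (z j) (w j)), hw₀, segIntegral_self, sub_zero]
  obtain ⟨P, hP⟩ := exists_segIntegral_eq_sub (hK n le_rfl)
  have hlast : segIntegral (K' n) (w n) ζ =
      segIntegral (K n) (z n) ζ - segIntegral (K n) (z n) (w n) := by
    rw [segIntegral_congr (convex_ball _ _) (hK' n le_rfl) (hw n le_rfl) hζ,
      hP _ (hw n le_rfl) _ hζ, hP _ (hz_self n le_rfl) _ hζ,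
      hP _ (hz_self n le_rfl) _ (hw n le_rfl)]
    ring
  rw [polylineIntegral, polylineIntegral, hlast]
  linear_combination hsum

end Integrals

section Chains

theorem exists_subdivision_segment {E : Type*} [SeminormedAddCommGroup E] [NormedSpace ℝ E]
    (x y : E) {δ : ℝ} (hδ : 0 < δ) : ∃ (n : ℕ) (z : ℕ → E), z 0 = x ∧ z n = y ∧
      (∀ j < n, dist (z (j + 1)) (z j) ≤ δ) ∧ ∀ j ≤ n, z j ∈ segment ℝ x y := by
  obtain ⟨n, hn⟩ := exists_nat_gt (dist x y / δ)
  have hn₀ : (0 : ℝ) < n := (div_nonneg dist_nonneg hδ.le).trans_lt hn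
  refine ⟨n, fun j ↦ AffineMap.lineMap x y (j / n : ℝ), by simp, by simp [hn₀.ne'],
    fun j _ ↦ ?_, fun j hj ↦ ?_⟩
  · have hstep : ((j + 1 : ℕ) / n : ℝ) - j / n = 1 / n := by push_cast; ring
    rw [dist_lineMap_lineMap, Real.dist_eq, hstep, abs_of_pos (by positivity), one_div_mul_eq_div,
      div_le_iff₀' hn₀]
    exact ((div_lt_iff₀ hδ).1 hn).le
  · rw [segment_eq_image_lineMap]
    exact mem_image_of_mem _ ⟨by positivity, div_le_one_of_le₀ (mod_cast hj) hn₀.le⟩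

/-- A sequence of analytic elements `F 0, …, F n` on the discs of radius `H` about the points
`z 0, …, z n`, any two consecutive ones being compatible. -/
structure IsElementSeq (H : ℝ) (n : ℕ) (z : ℕ → ℂ) (F : ℕ → ℂ → ℂ) : Prop where
  analyticOnNhd : ∀ j ≤ n, AnalyticOnNhd ℂ (F j) (ball (z j) H)
  eqOn_succ : ∀ j < n, EqOn (F j) (F (j + 1)) (ball (z j) H ∩ ball (z (j + 1)) H)

/-- The data representing the convolution near `c`: a broken line from `0` to `c` with vertices
`z j` at most `δ` apart, together with analytic elements `F j` at `z j` and `G j` at `c - z j` on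
discs of radius `6 * h`. -/
structure IsConvChain (c : ℂ) (δ h : ℝ) (n : ℕ) (z : ℕ → ℂ) (F G : ℕ → ℂ → ℂ) : Prop where
  node_zero : z 0 = 0
  node_last : z n = c
  dist_succ_le : ∀ j < n, dist (z (j + 1)) (z j) ≤ δ
  left : IsElementSeq (6 * h) n z F
  right : IsElementSeq (6 * h) n (fun j ↦ c - z j) G

/-- The integral of `ξ ↦ F ξ * G (ζ - ξ)` over the broken line `z 0, …, z n, ζ`, where `F` and `G`
are given along the line by the elements `F j` and `G j`. -/
def chainIntegral (n : ℕ) (z : ℕ → ℂ) (F G : ℕ → ℂ → ℂ) (ζ : ℂ) : ℂ :=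
  polylineIntegral n (fun j ↦ convKernel (F j) (G j) ζ) z ζ

/-- The index map `0, 0, 1, …, n - 1, n, n` which repeats both endpoints of a sequence. -/
def padIndex (n j : ℕ) : ℕ :=
  min (j - 1) n

variable {c c' : ℂ} {δ ν h H : ℝ} {n : ℕ} {z w : ℕ → ℂ} {F G F' G' : ℕ → ℂ → ℂ}

theorem padIndex_le (n j : ℕ) : padIndex n j ≤ n := min_le_right _ _

theorem padIndex_succ (n j : ℕ) : padIndex n (j + 1) = padIndex n j ∨
    padIndex n j < n ∧ padIndex n (j + 1) = padIndex n j + 1 := by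
  unfold padIndex
  omega

theorem polylineIntegral_pad (n : ℕ) (K : ℕ → ℂ → ℂ) (z : ℕ → ℂ) (ζ : ℂ) :
    polylineIntegral (n + 2) (K ∘ padIndex n) (z ∘ padIndex n) ζ = polylineIntegral n K z ζ := by
  have hlast : padIndex n (n + 1) = n ∧ padIndex n (n + 2) = n := by simp [padIndex]
  have hfirst : padIndex n 0 = 0 ∧ padIndex n 1 = 0 := by simp [padIndex]
  have hmid : ∀ j ∈ Finset.range n, padIndex n (j + 1) = j ∧ padIndex n (j + 1 + 1) = j + 1 := by
    intro j hj
    have := Finset.mem_range.1 hj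
    simp only [padIndex]
    omega
  simp only [polylineIntegral, Finset.sum_range_succ _ (n + 1), Finset.sum_range_succ' _ n,
    Function.comp_apply, hlast, hfirst, zero_add, segIntegral_self, add_zero]
  exact congrArg (· + _) (Finset.sum_congr rfl fun j hj ↦ by rw [(hmid j hj).1, (hmid j hj).2])

namespace IsElementSeq

theorem pad (hF : IsElementSeq H n z F) :
    IsElementSeq H (n + 2) (z ∘ padIndex n) (F ∘ padIndex n) where
  analyticOnNhd j _ := hF.analyticOnNhd _ (padIndex_le n j)
  eqOn_succ j _ := by
    rcases padIndex_succ n j with h | ⟨hlt, h⟩ <;> simp only [Function.comp_apply, h]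
    · exact eqOn_refl _ _
    · exact hF.eqOn_succ _ hlt

theorem move (hF : IsElementSeq H n z F) (hz : ∀ j < n, dist (z (j + 1)) (z j) ≤ δ)
    (hw : ∀ j ≤ n, dist (w j) (z j) ≤ ν) (hH : δ + ν < H)
    (hF' : ∀ j ≤ n, AnalyticOnNhd ℂ (F' j) (ball (w j) H))
    (heq : ∀ j ≤ n, EqOn (F j) (F' j) (ball (z j) H ∩ ball (w j) H)) : IsElementSeq H n w F' := by
  refine ⟨hF', fun j hj ↦ ?_⟩
  have hν : 0 ≤ ν := dist_nonneg.trans (hw j hj.le)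
  have hδ : 0 ≤ δ := dist_nonneg.trans (hz j hj)
  have h₀ : z j ∈ ball (z j) H := mem_ball_self (by linarith)
  have h₁ : z j ∈ ball (w j) H := mem_ball'.2 ((hw j hj.le).trans_lt (by linarith))
  have h₂ : z j ∈ ball (z (j + 1)) H := mem_ball'.2 ((hz j hj).trans_lt (by linarith))
  have h₃ : z j ∈ ball (w (j + 1)) H := mem_ball'.2
    ((dist_triangle _ (z (j + 1)) _).trans_lt (by linarith [hw (j + 1) hj, hz j hj]))
  exact eqOn_ball_inter_ball (hF' j hj.le) (hF' (j + 1) hj) h₁ h₃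
    ((eventuallyEq_of_eqOn_ball_inter_ball (heq j hj.le) h₀ h₁).symm.trans
      ((eventuallyEq_of_eqOn_ball_inter_ball (hF.eqOn_succ j hj) h₀ h₂).trans
        (eventuallyEq_of_eqOn_ball_inter_ball (heq (j + 1) hj) h₂ h₃)))

end IsElementSeq

theorem chainIntegral_pad (n : ℕ) (z : ℕ → ℂ) (F G : ℕ → ℂ → ℂ) (ζ : ℂ) :
    chainIntegral (n + 2) (z ∘ padIndex n) (F ∘ padIndex n) (G ∘ padIndex n) ζ =
      chainIntegral n z F G ζ :=
  polylineIntegral_pad n (fun j ↦ convKernel (F j) (G j) ζ) z ζ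

theorem sub_mem_ball_sub {c ζ p ξ : ℂ} {r s t : ℝ} (hζ : ζ ∈ ball c r) (hξ : ξ ∈ ball p s)
    (ht : r + s ≤ t) : ζ - ξ ∈ ball (c - p) t := by
  have := dist_sub_sub_le ζ ξ c p
  rw [mem_ball] at *
  linarith

theorem chainIntegral_const {R : ℝ} {f g : ℂ → ℂ} {ζ : ℂ} (hf : AnalyticOnNhd ℂ f (ball 0 R))
    (hg : AnalyticOnNhd ℂ g (ball 0 R)) (hz₀ : z 0 = 0) (hz : ∀ j ≤ n, z j ∈ ball 0 (R / 2))
    (hζ : ζ ∈ ball 0 (R / 2)) :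
    chainIntegral n z (fun _ ↦ f) (fun _ ↦ g) ζ = conv f g ζ := by
  have hR : 0 < R / 2 := pos_of_mem_ball hζ
  have hK : AnalyticOnNhd ℂ (convKernel f g ζ) (ball 0 (R / 2)) :=
    analyticOnNhd_convKernel hf hg (ball_subset_ball (by linarith)) fun ξ hξ ↦ by
      simpa using sub_mem_ball_sub hζ hξ (add_halves R).le
  rw [conv_eq_segIntegral, ← hz₀]
  exact polylineIntegral_const hK.differentiableOn hz hζ

namespace IsConvChain

theorem pad (hD : IsConvChain c δ h n z F G) (hδ : 0 ≤ δ) : IsConvChain c δ h (n + 2)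
    (z ∘ padIndex n) (F ∘ padIndex n) (G ∘ padIndex n) where
  node_zero := by simpa [padIndex] using hD.node_zero
  node_last := by simpa [padIndex] using hD.node_last
  dist_succ_le j _ := by
    rcases padIndex_succ n j with h | ⟨hlt, h⟩ <;> simp only [Function.comp_apply, h]
    · simpa using hδ
    · exact hD.dist_succ_le _ hlt
  left := hD.left.pad
  right := hD.right.pad

theorem analyticOnNhd (hD : IsConvChain c δ h n z F G) (hh : 0 < h) (hδ : δ ≤ h) :
    AnalyticOnNhd ℂ (chainIntegral n z F G) (ball c (2 * h)) := by
  have key {j : ℕ} (hj : j ≤ n) {b : ℂ → ℂ} (hb : AnalyticOnNhd ℂ b (ball c (2 * h)))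
      (hbz : ∀ ζ ∈ ball c (2 * h), b ζ ∈ ball (z j) (4 * h)) : AnalyticOnNhd ℂ
        (fun ζ ↦ segIntegral (convKernel (F j) (G j) ζ) (z j) (b ζ)) (ball c (2 * h)) := by
    have hmem {ζ : ℂ} (hζ : ζ ∈ ball c (2 * h)) {t : ℝ} (ht : t ∈ Icc (0 : ℝ) 1) :
        AffineMap.lineMap (z j) (b ζ) t ∈ ball (z j) (4 * h) :=
      (convex_ball _ _).lineMap_mem (mem_ball_self (by linarith)) (hbz ζ hζ) ht
    exact analyticOnNhd_segIntegral_convKernel isOpen_ball (hD.left.analyticOnNhd j hj)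
      (hD.right.analyticOnNhd j hj) hb
      (fun ζ hζ t ht ↦ ball_subset_ball (by linarith) (hmem hζ ht))
      fun ζ hζ t ht ↦ sub_mem_ball_sub hζ (hmem hζ ht) (by linarith)
  refine AnalyticOnNhd.add (Finset.analyticOnNhd_fun_sum _ fun j hj ↦ ?_)
    (key le_rfl analyticOnNhd_id fun ζ hζ ↦ ?_)
  · have hj := Finset.mem_range.1 hj
    exact key hj.le analyticOnNhd_const fun _ _ ↦
      (hD.dist_succ_le j hj).trans_lt (by linarith)
  · rw [hD.node_last]
    exact ball_subset_ball (by linarith) hζ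

theorem eqOn_chainIntegral (hD : IsConvChain c δ h n z F G) (hδ : δ ≤ h) (hh : 0 < h)
    (hw₀ : w 0 = 0) (hw : ∀ j ≤ n, dist (w j) (z j) ≤ h)
    (hw' : ∀ j ≤ n, dist (c' - w j) (c - z j) ≤ h)
    (hF' : ∀ j ≤ n, EqOn (F j) (F' j) (ball (z j) (6 * h) ∩ ball (w j) (6 * h)))
    (hG' : ∀ j ≤ n, EqOn (G j) (G' j) (ball (c - z j) (6 * h) ∩ ball (c' - w j) (6 * h))) :
    EqOn (chainIntegral n w F' G') (chainIntegral n z F G) (ball c (2 * h)) := by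
  intro ζ hζ
  have hball {x y : ℂ} {r : ℝ} (hr : r ≤ 5 * h) (hxy : dist y x ≤ h) : ball x r ⊆ ball y (6 * h) :=
    ball_subset_ball' (by rw [dist_comm]; linarith)
  have hsub {j : ℕ} {ξ : ℂ} (hξ : ξ ∈ ball (z j) (3 * h)) : ζ - ξ ∈ ball (c - z j) (5 * h) :=
    sub_mem_ball_sub hζ hξ (by linarith)
  refine polylineIntegral_eq_of_eqOn (ρ := 3 * h) (fun j hj ↦ ?_) (fun j hj ξ hξ ↦ ?_)
    (fun j hj ξ hξ ↦ ?_) (fun j hj ↦ (hD.dist_succ_le j hj).trans_lt (by linarith))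
    (fun j hj ↦ (hw j hj).trans_lt (by linarith)) (fun j hj ↦ ?_) (hw₀.trans hD.node_zero.symm) ?_
  · exact (analyticOnNhd_convKernel (hD.left.analyticOnNhd j hj) (hD.right.analyticOnNhd j hj)
      (ball_subset_ball (by linarith))
      fun ξ hξ ↦ ball_subset_ball (by linarith) (hsub hξ)).differentiableOn
  · have hz : dist (z (j + 1)) (z j) ≤ h := (hD.dist_succ_le j hj).trans hδ
    have hz' : dist (c - z (j + 1)) (c - z j) ≤ h := by rwa [dist_sub_left]
    exact congrArg₂ (· * ·)
      (hD.left.eqOn_succ j hj ⟨ball_subset_ball (by linarith) hξ, hball (by linarith) hz hξ⟩)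
      (hD.right.eqOn_succ j hj
        ⟨ball_subset_ball (by linarith) (hsub hξ), hball le_rfl hz' (hsub hξ)⟩)
  · exact (congrArg₂ (· * ·)
      (hF' j hj ⟨ball_subset_ball (by linarith) hξ, hball (by linarith) (hw j hj) hξ⟩)
      (hG' j hj
        ⟨ball_subset_ball (by linarith) (hsub hξ), hball le_rfl (hw' j hj) (hsub hξ)⟩)).symm
  · have := dist_triangle (w (j + 1)) (z (j + 1)) (z j)
    exact this.trans_lt (by linarith [hw (j + 1) hj, hD.dist_succ_le j hj])
  · rw [hD.node_last]
    exact ball_subset_ball (by linarith) hζ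

end IsConvChain

end Chains

section Deformation

variable {Ω : Set ℂ} {c c' p q z : ℂ} {x δ h : ℝ}

theorem infDist_add_le_of_add_mem (hne : Ω.Nonempty) (hcl : IsClosed Ω)
    (hadd : ∀ ω₁ ∈ Ω, ∀ ω₂ ∈ Ω, ω₁ + ω₂ ∈ Ω) (z w : ℂ) :
    infDist (z + w) Ω ≤ infDist z Ω + infDist w Ω := by
  obtain ⟨ω₁, h₁, hz⟩ := hcl.exists_infDist_eq_dist hne z
  obtain ⟨ω₂, h₂, hw⟩ := hcl.exists_infDist_eq_dist hne w
  rw [hz, hw]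
  exact (infDist_le_dist_of_mem (hadd ω₁ h₁ ω₂ h₂)).trans (dist_add_add_le _ _ _ _)

theorem abs_div_add_sub_div_add_le {a b a' b' d : ℝ} (ha : 0 ≤ a) (hb : 0 ≤ b) (hab : 0 < a + b)
    (hab' : 0 < a' + b') (had : |a' - a| ≤ d) (hbd : |b' - b| ≤ d) :
    |a' / (a' + b') - a / (a + b)| ≤ d / (a' + b') := by
  have hnum : |(a' - a) * b - a * (b' - b)| ≤ d * (a + b) := calc
    _ ≤ |a' - a| * b + a * |b' - b| := by
      simpa only [abs_mul, abs_of_nonneg ha, abs_of_nonneg hb] using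
        abs_sub ((a' - a) * b) (a * (b' - b))
    _ ≤ d * b + a * d := by gcongr
    _ = d * (a + b) := by ring
  have hdiff : a' / (a' + b') - a / (a + b) =
      ((a' - a) * b - a * (b' - b)) / (a + b) / (a' + b') := by
    field_simp
    ring
  rw [hdiff, abs_div, abs_div, abs_of_pos hab, abs_of_pos hab']
  exact div_le_div_of_nonneg_right ((div_le_iff₀ hab).2 hnum) hab'.le

/-- The proportion of the displacement of the end point `c` which is passed on to the point `z` of
a path from `0` to `c`: it vanishes on `Ω`, and equals `1` where `c - z ∈ Ω`. -/
def deformWeight (Ω : Set ℂ) (c z : ℂ) : ℝ :=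
  infDist z Ω / (infDist z Ω + infDist (c - z) Ω)

/-- The deformation of the plane which turns paths `H` from `0` to `c` with `H` and `c - H`
avoiding `Ω` into paths to `c'` with the same property. -/
def deform (Ω : Set ℂ) (c c' z : ℂ) : ℂ :=
  z + (deformWeight Ω c z : ℂ) * (c' - c)

/-- The displacement of `c` to `c'` is at most the fraction `x` of the distance from `c` to `Ω`,
which in turn bounds the denominator of `deformWeight Ω c` from below. -/
structure IsSmallShift (Ω : Set ℂ) (c c' : ℂ) (x : ℝ) : Prop where
  infDist_pos : 0 < infDist c Ω
  infDist_le_add : ∀ z, infDist c Ω ≤ infDist z Ω + infDist (c - z) Ω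
  dist_le : dist c' c ≤ x * infDist c Ω

theorem abs_infDist_sub_infDist_le (z w : ℂ) : |infDist z Ω - infDist w Ω| ≤ dist z w := by
  simpa [Real.dist_eq] using (lipschitz_infDist_pt Ω).dist_le_mul z w

theorem deformWeight_nonneg : 0 ≤ deformWeight Ω c z :=
  div_nonneg infDist_nonneg (add_nonneg infDist_nonneg infDist_nonneg)

theorem dist_deform_self : dist (deform Ω c c' z) z = deformWeight Ω c z * dist c' c := by
  rw [deform, dist_self_add_left, norm_mul, Complex.norm_of_nonneg deformWeight_nonneg,
    dist_eq_norm]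

theorem dist_deform_self_le : dist (deform Ω c c' z) z ≤ dist c' c := by
  rw [dist_deform_self]
  exact mul_le_of_le_one_left dist_nonneg (div_le_one_of_le₀
    (le_add_of_nonneg_right infDist_nonneg) (add_nonneg infDist_nonneg infDist_nonneg))

namespace IsSmallShift

theorem nonneg (h : IsSmallShift Ω c c' x) : 0 ≤ x :=
  nonneg_of_mul_nonneg_left (dist_nonneg.trans h.dist_le) h.infDist_pos

theorem sub_deform (h : IsSmallShift Ω c c' x) (z : ℂ) :
    c' - deform Ω c c' z = deform Ω c c' (c - z) := by
  have hpos : infDist z Ω + infDist (c - z) Ω ≠ 0 :=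
    (h.infDist_pos.trans_le (h.infDist_le_add z)).ne'
  have hweight : deformWeight Ω c (c - z) = 1 - deformWeight Ω c z := by
    rw [deformWeight, deformWeight, sub_sub_cancel, eq_sub_iff_add_eq, add_comm (infDist _ _),
      ← add_div, add_comm (infDist _ _), div_self hpos]
  rw [deform, deform, hweight]
  push_cast
  ring

theorem dist_deform_self_le_mul (h : IsSmallShift Ω c c' x) (z : ℂ) :
    dist (deform Ω c c' z) z ≤ x * infDist z Ω := by
  have hpos := h.infDist_pos
  have hweight : deformWeight Ω c z ≤ infDist z Ω / infDist c Ω :=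
    div_le_div_of_nonneg_left infDist_nonneg hpos (h.infDist_le_add z)
  calc
    dist (deform Ω c c' z) z = deformWeight Ω c z * dist c' c := dist_deform_self
    _ ≤ infDist z Ω / infDist c Ω * (x * infDist c Ω) :=
      mul_le_mul hweight h.dist_le dist_nonneg (div_nonneg infDist_nonneg hpos.le)
    _ = x * infDist z Ω := by field_simp

theorem dist_deform_le (h : IsSmallShift Ω c c' x) (z w : ℂ) :
    dist (deform Ω c c' w) (deform Ω c c' z) ≤ (1 + x) * dist w z := by
  have hpos := h.infDist_pos
  have hw := hpos.trans_le (h.infDist_le_add w)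
  have hweight : dist (deformWeight Ω c w) (deformWeight Ω c z) ≤ dist w z / infDist c Ω :=
    (abs_div_add_sub_div_add_le infDist_nonneg infDist_nonneg
      (hpos.trans_le (h.infDist_le_add z)) hw (abs_infDist_sub_infDist_le w z)
      ((abs_infDist_sub_infDist_le _ _).trans_eq (dist_sub_left c w z))).trans
      (div_le_div_of_nonneg_left dist_nonneg hpos (h.infDist_le_add w))
  calc
    _ ≤ dist w z + dist ((deformWeight Ω c w : ℂ) * (c' - c)) (deformWeight Ω c z * (c' - c)) :=
      dist_add_add_le _ _ _ _
    _ = dist w z + dist (deformWeight Ω c w) (deformWeight Ω c z) * dist c' c := by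
      rw [dist_eq_norm (_ * _), ← sub_mul, norm_mul, ← Complex.ofReal_sub, Complex.norm_real,
        dist_eq_norm c', dist_eq_norm (deformWeight Ω c w)]
    _ ≤ dist w z + dist w z / infDist c Ω * (x * infDist c Ω) := by
      gcongr
      exact h.dist_le
    _ = (1 + x) * dist w z := by
      field_simp

theorem mul_infDist_le_infDist_deform (h : IsSmallShift Ω c c' x) (z : ℂ) :
    (1 - x) * infDist z Ω ≤ infDist (deform Ω c c' z) Ω := by
  have := infDist_le_infDist_add_dist (s := Ω) (x := z) (y := deform Ω c c' z)
  rw [dist_comm] at this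
  linarith [h.dist_deform_self_le_mul z]

theorem norm_deform_le (h : IsSmallShift Ω c c' x) (h0 : (0 : ℂ) ∈ Ω) (z : ℂ) :
    ‖deform Ω c c' z‖ ≤ (1 + x) * ‖z‖ := by
  have hz : infDist z Ω ≤ ‖z‖ := by simpa using infDist_le_dist_of_mem (x := z) h0
  have := dist_triangle (deform Ω c c' z) z 0
  rw [dist_zero_right, dist_zero_right] at this
  linarith [h.dist_deform_self_le_mul z, mul_le_mul_of_nonneg_left hz h.nonneg]

end IsSmallShift

/-- The admissible moves of a vertex `p` of a broken line from `0` to `c` when its end point moves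
to `c'`. The first two alternatives are needed since `deform` fixes `0` only if `0 ∈ Ω`. -/
def IsMove (Ω : Set ℂ) (c c' p q : ℂ) : Prop :=
  p = 0 ∧ q = 0 ∨ p = c ∧ q = c' ∨ q = deform Ω c c' p

theorem IsMove.dist_le (hm : IsMove Ω c c' p q) : dist q p ≤ dist c' c := by
  rcases hm with ⟨rfl, rfl⟩ | ⟨rfl, rfl⟩ | rfl
  · simp
  · rfl
  · exact dist_deform_self_le

theorem IsMove.reflect (hm : IsMove Ω c c' p q) (h : IsSmallShift Ω c c' x) :
    IsMove Ω c c' (c - p) (c' - q) := by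
  rcases hm with ⟨rfl, rfl⟩ | ⟨rfl, rfl⟩ | rfl
  · exact .inr (.inl ⟨sub_zero _, sub_zero _⟩)
  · exact .inl ⟨sub_self _, sub_self _⟩
  · exact .inr (.inr (h.sub_deform p))

/-- The two end points are repeated so that the steps from `0` to `deform 0` and from `deform c`
to `c'` are steps of the new broken line. -/
theorem IsConvChain.exists_isMove {n : ℕ} {z : ℕ → ℂ} {F G : ℕ → ℂ → ℂ}
    (hD : IsConvChain c δ h n z F G) (hs : IsSmallShift Ω c c' x) (hδ : dist c' c ≤ δ) :
    ∃ w : ℕ → ℂ, w 0 = 0 ∧ w (n + 2) = c' ∧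
      (∀ j < n + 2, dist (w (j + 1)) (w j) ≤ (1 + x) * δ) ∧
      ∀ j ≤ n + 2, IsMove Ω c c' ((z ∘ padIndex n) j) (w j) := by
  have hδ₀ : 0 ≤ δ := dist_nonneg.trans hδ
  have hx := hs.nonneg
  have hpad := hD.pad hδ₀
  have hends : dist (deform Ω c c' 0) 0 ≤ (1 + x) * δ :=
    (dist_deform_self_le.trans hδ).trans (le_mul_of_one_le_left hδ₀ (by linarith))
  refine ⟨fun j ↦ if j = 0 then 0 else if j = n + 2 then c' else
    deform Ω c c' ((z ∘ padIndex n) j), rfl, by simp, fun j hj ↦ ?_, fun j _ ↦ ?_⟩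
  · dsimp only
    rw [if_neg j.succ_ne_zero, if_neg (show j ≠ n + 2 by omega)]
    obtain rfl | hj₀ := eq_or_ne j 0
    · simpa [padIndex, hD.node_zero] using hends
    rw [if_neg hj₀]
    split_ifs with hjn
    · obtain rfl : j = n + 1 := by omega
      rw [dist_eq_norm, hs.sub_deform]
      simpa [padIndex, hD.node_last, dist_eq_norm] using hends
    · exact (hs.dist_deform_le _ _).trans (by gcongr; exact hpad.dist_succ_le j hj)
  · dsimp only
    split_ifs with h₀ hn
    · exact .inl ⟨by rw [h₀, hpad.node_zero], rfl⟩
    · exact .inr (.inl ⟨by rw [hn, hpad.node_last], rfl⟩)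
    · exact .inr (.inr rfl)

end Deformation

section Admissible

variable {Ω : Set ℂ} {R ε ε' κ κ' δ δ' h H x : ℝ} {f g F φ : ℂ → ℂ} {c c' p q z : ℂ}

theorem IsOmegaContOn.le_infDist (hf : IsOmegaContOn Ω R f) (hne : Ω.Nonempty)
    (hz : ‖z‖ + κ ≤ R) (h0 : (0 : ℂ) ∈ Ω → κ ≤ ‖z‖) : κ ≤ infDist z Ω := by
  refine (Metric.le_infDist hne).2 fun ω hω ↦ ?_
  obtain rfl | hω₀ := eq_or_ne ω 0
  · simpa using h0 hω
  · have hRω : R ≤ ‖ω‖ := by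
      by_contra hlt
      exact hf.notMem ω (mem_ball_zero_iff.2 (not_le.1 hlt)) hω₀ hω
    have := norm_le_norm_add_norm_sub' ω z
    rw [dist_eq_norm']
    linarith

/-- An element at `z` usable in the continuation of a convolution: either the germ `f` itself, at
distance at most `ε` from `0 ∈ Ω`, or a branch of `f` at distance at least `κ` from `Ω`. -/
structure IsAdmissible (Ω : Set ℂ) (R : ℝ) (f : ℂ → ℂ) (ε κ H : ℝ) (z : ℂ) (F : ℂ → ℂ) : Prop where
  analyticOnNhd : AnalyticOnNhd ℂ F (ball z H)
  eq_or_isBranchAt : (0 : ℂ) ∈ Ω ∧ ‖z‖ ≤ ε ∧ F = f ∨ κ ≤ infDist z Ω ∧ IsBranchAt Ω R f z F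

theorem IsOmegaContOn.isAdmissible (hf : IsOmegaContOn Ω R f) (hne : Ω.Nonempty) (hcl : IsClosed Ω)
    (hz : ‖z‖ + κ ≤ R) (hκ : 0 < κ) (hκε : κ ≤ ε) (hH : H ≤ κ) :
    IsAdmissible Ω R f ε κ H z f := by
  refine ⟨hf.analyticOnNhd.mono (ball_subset_ball' ?_), ?_⟩
  · rw [dist_zero_right]
    linarith
  by_cases h0 : (0 : ℂ) ∈ Ω ∧ ‖z‖ ≤ ε
  · exact .inl ⟨h0.1, h0.2, rfl⟩
  · have hd : κ ≤ infDist z Ω := hf.le_infDist hne hz fun h ↦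
      hκε.trans (not_le.1 fun hzε ↦ h0 ⟨h, hzε⟩).le
    exact .inr ⟨hd, hf.isBranchAt (mem_ball_zero_iff.2 (by linarith))
      ((hcl.notMem_iff_infDist_pos hne).2 (hκ.trans_le hd))⟩

namespace IsAdmissible

theorem isBranchAt_of_dist_lt (hF : IsAdmissible Ω R f ε κ H p F) (hf : IsOmegaContOn Ω R f)
    (hpq : dist q p < H) (hq : q ∉ Ω) (hε : ε + H ≤ R) (hκ : H ≤ κ) : IsBranchAt Ω R f q F := by
  rcases hF.eq_or_isBranchAt with ⟨-, hp, rfl⟩ | ⟨hp, hbranch⟩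
  · have := dist_triangle q p 0
    rw [dist_zero_right p] at this
    exact hf.isBranchAt (mem_ball.2 (by linarith)) hq
  · exact hbranch.of_analyticOnNhd hf (convex_ball p H)
      ((ball_subset_ball (hκ.trans hp)).trans ball_infDist_subset_compl) hF.analyticOnNhd
      (mem_ball_self (dist_nonneg.trans_lt hpq)) hpq

theorem exists_of_dist_lt (hF : IsAdmissible Ω R f ε κ H p F) (hf : IsOmegaContOn Ω R f)
    (hne : Ω.Nonempty) (hcl : IsClosed Ω) (hpq : dist q p < H) (hq : κ' ≤ infDist q Ω)
    (hε : ε + H ≤ R) (hκ : H ≤ κ) (hκ' : H ≤ κ') :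
    ∃ F', IsAdmissible Ω R f ε' κ' H q F' ∧ EqOn F F' (ball p H ∩ ball q H) := by
  have hH : 0 < H := dist_nonneg.trans_lt hpq
  have hqΩ : q ∉ Ω := (hcl.notMem_iff_infDist_pos hne).2 (by linarith)
  have hbranch := hF.isBranchAt_of_dist_lt hf hpq hqΩ hε hκ
  obtain ⟨F', hF', heq, -⟩ := hbranch.exists_analyticOnNhd_ball hf hne hcl
  have hF' : AnalyticOnNhd ℂ F' (ball q H) := hF'.mono (ball_subset_ball (hκ'.trans hq))
  exact ⟨F', ⟨hF', .inr ⟨hq, hbranch.congr heq.symm⟩⟩,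
    eqOn_ball_inter_ball hF.analyticOnNhd hF' hpq (mem_ball_self hH) heq.symm⟩

theorem exists_of_isMove (hF : IsAdmissible Ω R f ε κ H p F) (hf : IsOmegaContOn Ω R f)
    (hne : Ω.Nonempty) (hcl : IsClosed Ω) (hs : IsSmallShift Ω c c' x) (hm : IsMove Ω c c' p q)
    (hcc' : dist c' c < H) (hc' : κ' ≤ infDist c' Ω) (hx : x ≤ 1) (hε₀ : 0 ≤ ε)
    (hκ₀ : 0 ≤ κ) (hε : (1 + x) * ε ≤ ε') (hκ : κ' ≤ (1 - x) * κ) (hε' : ε' + H ≤ R)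
    (hκ' : H ≤ κ') :
    ∃ F', IsAdmissible Ω R f ε' κ' H q F' ∧ EqOn F F' (ball p H ∩ ball q H) := by
  have hpq : dist q p < H := hm.dist_le.trans_lt hcc'
  have hεε' : ε ≤ ε' := (le_mul_of_one_le_left hε₀ (by linarith [hs.nonneg])).trans hε
  have hκκ' : κ' ≤ κ := hκ.trans (mul_le_of_le_one_left hκ₀ (by linarith [hs.nonneg]))
  have hjump (hq : κ' ≤ infDist q Ω) :=
    hF.exists_of_dist_lt (ε' := ε') hf hne hcl hpq hq (by linarith) (hκ'.trans hκκ') hκ'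
  rcases hm with ⟨rfl, rfl⟩ | ⟨rfl, rfl⟩ | rfl
  · exact ⟨F, ⟨hF.analyticOnNhd, hF.eq_or_isBranchAt.imp
      (fun ⟨h0, hp, h⟩ ↦ ⟨h0, hp.trans hεε', h⟩) fun ⟨hp, h⟩ ↦ ⟨hκκ'.trans hp, h⟩⟩, eqOn_refl _ _⟩
  · exact hjump hc'
  rcases hF.eq_or_isBranchAt with ⟨h0, hp, rfl⟩ | ⟨hp, -⟩
  · have hq : ‖deform Ω c c' p‖ ≤ ε' := ((hs.norm_deform_le h0 p).trans
      (mul_le_mul_of_nonneg_left hp (by linarith [hs.nonneg]))).trans hε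
    refine ⟨F, ⟨hf.analyticOnNhd.mono (ball_subset_ball' ?_), .inl ⟨h0, hq, rfl⟩⟩, eqOn_refl _ _⟩
    rw [dist_zero_right]
    linarith
  · exact hjump (hκ.trans ((mul_le_mul_of_nonneg_left hp (by linarith)).trans
      (hs.mul_infDist_le_infDist_deform p)))

end IsAdmissible

/-- `φ` is the integral of `f` and `g` over an admissible chain from `0` to `c`: an element at `c`
of the continuation of `conv f g`. The parameters `ε`, `κ`, `δ`, `h` measure the quality of the
chain. -/
def IsConvElement (Ω : Set ℂ) (R : ℝ) (f g : ℂ → ℂ) (ε κ δ h : ℝ) (c : ℂ) (φ : ℂ → ℂ) : Prop :=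
  ∃ (n : ℕ) (z : ℕ → ℂ) (F G : ℕ → ℂ → ℂ), IsConvChain c δ h n z F G ∧
    (∀ j ≤ n, IsAdmissible Ω R f ε κ (6 * h) (z j) (F j)) ∧
    (∀ j ≤ n, IsAdmissible Ω R g ε κ (6 * h) (c - z j) (G j)) ∧ φ = chainIntegral n z F G

theorem IsConvElement.analyticOnNhd (hφ : IsConvElement Ω R f g ε κ δ h c φ) (hh : 0 < h)
    (hδ : δ ≤ h) : AnalyticOnNhd ℂ φ (ball c (2 * h)) := by
  obtain ⟨n, z, F, G, hD, -, -, rfl⟩ := hφ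
  exact hD.analyticOnNhd hh hδ

theorem IsConvElement.exists_of_isSmallShift (hφ : IsConvElement Ω R f g ε κ δ h c φ)
    (hf : IsOmegaContOn Ω R f) (hg : IsOmegaContOn Ω R g) (hne : Ω.Nonempty) (hcl : IsClosed Ω)
    (hs : IsSmallShift Ω c c' x) (hh : 0 < h) (hcc' : dist c' c ≤ δ) (hδh : δ ≤ h)
    (hc' : κ' ≤ infDist c' Ω) (hx : x ≤ 1) (hε₀ : 0 ≤ ε) (hκ₀ : 0 ≤ κ)
    (hε : (1 + x) * ε ≤ ε') (hκ : κ' ≤ (1 - x) * κ) (hδ : (1 + x) * δ ≤ δ')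
    (hε' : ε' + 6 * h ≤ R) (hκ' : 6 * h ≤ κ') :
    ∃ φ', IsConvElement Ω R f g ε' κ' δ' h c' φ' ∧ EqOn φ' φ (ball c (2 * h)) := by
  obtain ⟨n, z, F, G, hD, hF, hG, rfl⟩ := hφ
  have hpad := hD.pad (dist_nonneg.trans hcc')
  obtain ⟨w, hw₀, hwn, hwδ, hm⟩ := hD.exists_isMove hs hcc'
  have hdist {p q : ℂ} (h : IsMove Ω c c' p q) : dist q p ≤ δ := h.dist_le.trans hcc'
  have hm' (j) (hj : j ≤ n + 2) := (hm j hj).reflect hs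
  choose! F' hF' hFF' using fun j (hj : j ≤ n + 2) ↦ (hF _ (padIndex_le n j)).exists_of_isMove hf
    hne hcl hs (hm j hj) (by linarith) hc' hx hε₀ hκ₀ hε hκ hε' hκ'
  choose! G' hG' hGG' using fun j (hj : j ≤ n + 2) ↦ (hG _ (padIndex_le n j)).exists_of_isMove hg
    hne hcl hs (hm' j hj) (by linarith) hc' hx hε₀ hκ₀ hε hκ hε' hκ'
  have hD' : IsConvChain c' δ' h (n + 2) w F' G' :=
    ⟨hw₀, hwn, fun j hj ↦ (hwδ j hj).trans hδ,
      hpad.left.move hpad.dist_succ_le (fun j hj ↦ hdist (hm j hj)) (by linarith)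
        (fun j hj ↦ (hF' j hj).analyticOnNhd) hFF',
      hpad.right.move (fun j hj ↦ (dist_sub_left c _ _).trans_le (hpad.dist_succ_le j hj))
        (fun j hj ↦ hdist (hm' j hj)) (by linarith) (fun j hj ↦ (hG' j hj).analyticOnNhd) hGG'⟩
  refine ⟨_, ⟨n + 2, w, F', G', hD', hF', hG', rfl⟩, fun ζ hζ ↦ ?_⟩
  rw [← chainIntegral_pad n z F G]
  exact hpad.eqOn_chainIntegral hδh hh hw₀ (fun j hj ↦ (hdist (hm j hj)).trans hδh)
    (fun j hj ↦ (hdist (hm' j hj)).trans hδh) hFF' hGG' hζ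

theorem exists_isConvElement_conv (hf : IsOmegaContOn Ω R f) (hg : IsOmegaContOn Ω R g)
    (hne : Ω.Nonempty) (hcl : IsClosed Ω) (hc : c ∈ ball 0 (R / 4)) (hδ : 0 < δ) (hκ : 0 < κ)
    (hκε : κ ≤ ε) (hκR : κ ≤ R / 4) (hh : 6 * h ≤ κ) :
    ∃ φ, IsConvElement Ω R f g ε κ δ h c φ ∧ φ =ᶠ[𝓝 c] conv f g := by
  have hR : 0 < R / 4 := pos_of_mem_ball hc
  obtain ⟨n, z, hz₀, hzn, hzδ, hzc⟩ := exists_subdivision_segment 0 c hδ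
  have hz (j) (hj : j ≤ n) : z j ∈ ball 0 (R / 4) :=
    (convex_ball _ _).segment_subset (mem_ball_self hR) hc (hzc j hj)
  have hz' (j) (hj : j ≤ n) : c - z j ∈ ball 0 (R / 4) := by
    rw [mem_ball_zero_iff, ← dist_eq_norm']
    exact (convex_ball c (R / 4)).segment_subset (mem_ball'.2 (mem_ball.1 hc)) (mem_ball_self hR)
      (hzc j hj)
  have hadm {k : ℂ → ℂ} (hk : IsOmegaContOn Ω R k) {p : ℂ} (hp : p ∈ ball 0 (R / 4)) :
      IsAdmissible Ω R k ε κ (6 * h) p k :=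
    hk.isAdmissible hne hcl (by linarith [mem_ball_zero_iff.1 hp]) hκ hκε hh
  refine ⟨_, ⟨n, z, fun _ ↦ f, fun _ ↦ g, ⟨hz₀, hzn, hzδ,
    ⟨fun j hj ↦ (hadm hf (hz j hj)).analyticOnNhd, fun _ _ ↦ eqOn_refl _ _⟩,
    ⟨fun j hj ↦ (hadm hg (hz' j hj)).analyticOnNhd, fun _ _ ↦ eqOn_refl _ _⟩⟩,
    fun j hj ↦ hadm hf (hz j hj), fun j hj ↦ hadm hg (hz' j hj), rfl⟩, ?_⟩
  have hball : ball (0 : ℂ) (R / 4) ⊆ ball 0 (R / 2) := ball_subset_ball (by linarith)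
  filter_upwards [isOpen_ball.mem_nhds hc] with ζ hζ
  exact chainIntegral_const hf.analyticOnNhd hg.analyticOnNhd hz₀ (fun j hj ↦ hball (hz j hj))
    (hball hζ)

end Admissible

section Convolution

variable {Ω : Set ℂ} {R : ℝ} {f g : ℂ → ℂ}

theorem exp_le_one_sub_mul_exp {x y z : ℝ} (hx : x ∈ Icc (0 : ℝ) (1 / 2)) (h : 2 * x + y ≤ z) :
    Real.exp y ≤ (1 - x) * Real.exp z := by
  have hx' : 1 ≤ (1 - x) * Real.exp (2 * x) := by
    nlinarith [Real.add_one_le_exp (2 * x), hx.1, hx.2]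
  calc
    Real.exp y ≤ (1 - x) * Real.exp (2 * x) * Real.exp y :=
      le_mul_of_one_le_left (Real.exp_nonneg y) hx'
    _ = (1 - x) * Real.exp (2 * x + y) := by rw [Real.exp_add, mul_assoc]
    _ ≤ (1 - x) * Real.exp z := by
      gcongr
      linarith [hx.2]

/-- Parameters of an `IsConvElement` which remain usable when `ε` and `δ` are multiplied, and `κ` is
divided, by a factor in `[1, E]`. -/
structure IsQuality (R E ε κ δ h : ℝ) : Prop where
  one_le : 1 ≤ E
  le_eps : κ ≤ ε
  le_div_four : κ ≤ R / 4
  delta_pos : 0 < δ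
  h_pos : 0 < h
  delta_mul_le : δ * E ≤ h
  six_mul_le : 6 * h ≤ κ / E
  add_le : ε * E + 6 * h ≤ R

theorem exists_isQuality {E m : ℝ} (hR : 0 < R) (hE : 1 ≤ E) (hm : 0 < m) :
    ∃ ε κ δ h, IsQuality R E ε κ δ h ∧ κ ≤ m := by
  have hE₀ : 0 < E := one_pos.trans_le hE
  have hε : 0 < R / 4 / E := by positivity
  have hκ : 0 < min (R / 4 / E) m := lt_min hε hm
  have hεR : R / 4 / E ≤ R / 4 := div_le_self (by positivity) hE
  refine ⟨R / 4 / E, min (R / 4 / E) m, min (R / 4 / E) m / E / 6 / E,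
    min (R / 4 / E) m / E / 6, ⟨hE, min_le_left _ _, (min_le_left _ _).trans hεR,
    by positivity, by positivity, (div_mul_cancel₀ _ hE₀.ne').le,
    (mul_div_cancel₀ _ (by norm_num)).le, ?_⟩, min_le_right _ _⟩
  rw [div_mul_cancel₀ _ hE₀.ne', mul_div_cancel₀ _ (by norm_num)]
  have hκE : min (R / 4 / E) m / E ≤ R / 4 :=
    (div_le_self hκ.le hE).trans ((min_le_left _ _).trans hεR)
  linarith

theorem IsQuality.kappa_pos {E ε κ δ h : ℝ} (hQ : IsQuality R E ε κ δ h) : 0 < κ :=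
  (div_pos_iff_of_pos_right (one_pos.trans_le hQ.one_le)).1 (by linarith [hQ.h_pos, hQ.six_mul_le])

theorem IsQuality.six_mul_le_kappa {E ε κ δ h : ℝ} (hQ : IsQuality R E ε κ δ h) : 6 * h ≤ κ :=
  hQ.six_mul_le.trans (div_le_self hQ.kappa_pos.le hQ.one_le)

theorem IsQuality.mul_le_h {E ε κ δ h r : ℝ} (hQ : IsQuality R E ε κ δ h) (hr : r ≤ E) :
    δ * r ≤ h :=
  (mul_le_mul_of_nonneg_left hr hQ.delta_pos.le).trans hQ.delta_mul_le

theorem IsConvElement.exists_of_le_one_sub_mul {ε κ δ h r r' E x : ℝ} {c c' : ℂ} {φ : ℂ → ℂ}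
    (hφ : IsConvElement Ω R f g (ε * r) (κ / r) (δ * r) h c φ) (hQ : IsQuality R E ε κ δ h)
    (hf : IsOmegaContOn Ω R f) (hg : IsOmegaContOn Ω R g) (hne : Ω.Nonempty) (hcl : IsClosed Ω)
    (hs : IsSmallShift Ω c c' x) (hcc' : dist c' c ≤ δ) (hc' : κ ≤ infDist c' Ω) (hx : x ≤ 1)
    (hr : 1 ≤ r) (hrr' : r ≤ (1 - x) * r') (hr' : r' ≤ E) :
    ∃ φ', IsConvElement Ω R f g (ε * r') (κ / r') (δ * r') h c' φ' ∧
      EqOn φ' φ (ball c (2 * h)) := by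
  have hx₀ := hs.nonneg
  have hr'₀ : 0 < r' := by nlinarith
  have hh := hQ.h_pos
  have hκ₀ := hQ.kappa_pos
  have hε₀ : 0 < ε := hκ₀.trans_le hQ.le_eps
  have hgrow : (1 + x) * r ≤ r' := calc
    (1 + x) * r ≤ (1 + x) * ((1 - x) * r') := by gcongr
    _ = r' - x ^ 2 * r' := by ring
    _ ≤ r' := sub_le_self _ (by positivity)
  have hrr'₁ : r ≤ r' := (le_mul_of_one_le_left (by linarith) (by linarith)).trans hgrow
  refine hφ.exists_of_isSmallShift hf hg hne hcl hs hh ?_ ?_ ?_ hx (by positivity)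
    (by positivity) ?_ ?_ ?_ ?_ ?_
  · exact hcc'.trans (le_mul_of_one_le_right hQ.delta_pos.le hr)
  · exact hQ.mul_le_h (hrr'₁.trans hr')
  · exact (div_le_self hκ₀.le (hr.trans hrr'₁)).trans hc'
  · rw [mul_left_comm]
    gcongr
  · rw [mul_div_assoc', div_le_div_iff₀ hr'₀ (by linarith), mul_right_comm, mul_comm]
    gcongr
  · rw [mul_left_comm]
    exact mul_le_mul_of_nonneg_left hgrow hQ.delta_pos.le
  · exact le_trans (by gcongr) hQ.add_le
  · exact hQ.six_mul_le.trans (by gcongr)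

/-- An element at `γ t` of the continuation of `conv f g` along `γ`, the quality of which has
deteriorated by the factor `exp (2 * L * t)`. -/
def IsConvElementAlong (Ω : Set ℂ) (R : ℝ) (f g : ℂ → ℂ) (ε κ δ h L : ℝ) (γ : ℝ → ℂ) (t : ℝ)
    (φ : ℂ → ℂ) : Prop :=
  IsConvElement Ω R f g (ε * Real.exp (2 * (L * t))) (κ / Real.exp (2 * (L * t)))
    (δ * Real.exp (2 * (L * t))) h (γ t) φ

theorem IsConvElementAlong.exists_contAlong {ε κ δ h L m s u : ℝ} {K : NNReal} {γ : ℝ → ℂ}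
    {φ : ℂ → ℂ} (hφ : IsConvElementAlong Ω R f g ε κ δ h L γ s φ)
    (hQ : IsQuality R (Real.exp (2 * L)) ε κ δ h) (hf : IsOmegaContOn Ω R f)
    (hg : IsOmegaContOn Ω R g) (hne : Ω.Nonempty) (hcl : IsClosed Ω)
    (hadd : ∀ ω₁ ∈ Ω, ∀ ω₂ ∈ Ω, ω₁ + ω₂ ∈ Ω) (hγ : LipschitzOnWith K γ (Icc 0 1))
    (hγm : ∀ t ∈ Icc (0 : ℝ) 1, m ≤ infDist (γ t) Ω) (hκm : κ ≤ m) (hKm : K = L * m)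
    (hs : s ∈ Icc (0 : ℝ) 1) (hu : u ∈ Icc (0 : ℝ) 1) (hsu : s ≤ u) (hKδ : K * (u - s) ≤ δ) :
    ∃ φ', IsConvElementAlong Ω R f g ε κ δ h L γ u φ' ∧ ContAlong φ γ s u φ' := by
  have hm : 0 < m := hQ.kappa_pos.trans_le hκm
  have hL : 0 ≤ L := nonneg_of_mul_nonneg_left (hKm ▸ K.2) hm
  have hL' {t : ℝ} (ht : t ∈ Icc (0 : ℝ) 1) : Real.exp (2 * (L * t)) ≤ Real.exp (2 * L) :=
    Real.exp_le_exp.2 (by linarith [mul_le_of_le_one_right hL ht.2])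
  have hδh : δ ≤ h := by simpa using hQ.mul_le_h hQ.one_le
  have hdist (v) (hv : v ∈ Icc s u) : dist (γ v) (γ s) ≤ K * (u - s) := by
    refine (hγ.dist_le_mul v ⟨hs.1.trans hv.1, hv.2.trans hu.2⟩ s hs).trans ?_
    rw [Real.dist_eq, abs_of_nonneg (sub_nonneg.2 hv.1)]
    gcongr
    exact hv.2
  have hu_dist := hdist u (right_mem_Icc.2 hsu)
  have hx : L * (u - s) ∈ Icc (0 : ℝ) (1 / 2) := by
    refine ⟨mul_nonneg hL (sub_nonneg.2 hsu), le_of_mul_le_mul_right ?_ hm⟩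
    rw [mul_right_comm, ← hKm]
    linarith [hQ.six_mul_le_kappa, hQ.h_pos]
  have hshift : IsSmallShift Ω (γ s) (γ u) (L * (u - s)) := by
    refine ⟨hm.trans_le (hγm s hs), fun z ↦ ?_, hu_dist.trans ?_⟩
    · simpa using infDist_add_le_of_add_mem hne hcl hadd z (γ s - z)
    · rw [hKm, mul_right_comm]
      exact mul_le_mul_of_nonneg_left (hγm s hs) hx.1
  obtain ⟨φ', hφ', heq⟩ := hφ.exists_of_le_one_sub_mul hQ hf hg hne hcl hshift
    (hu_dist.trans hKδ) (hκm.trans (hγm u hu)) (by linarith [hx.2])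
    (Real.one_le_exp (mul_nonneg two_pos.le (mul_nonneg hL hs.1)))
    (exp_le_one_sub_mul_exp hx (by linarith : _ ≤ 2 * (L * u))) (hL' hu)
  have hball (v) (hv : v ∈ Icc s u) : γ v ∈ ball (γ s) (2 * h) :=
    mem_ball.2 (by linarith [hdist v hv, hQ.h_pos])
  have han := hφ.analyticOnNhd hQ.h_pos (hQ.mul_le_h (hL' hs))
  exact ⟨φ', hφ', (contAlong_self fun v hv ↦ han _ (hball v hv)).congr_right
    (heq.symm.eventuallyEq_of_mem (isOpen_ball.mem_nhds (hball u (right_mem_Icc.2 hsu))))⟩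

theorem continuableAlong_conv {γ : ℝ → ℂ} (hf : IsOmegaContOn Ω R f) (hg : IsOmegaContOn Ω R g)
    (hne : Ω.Nonempty) (hcl : IsClosed Ω) (hadd : ∀ ω₁ ∈ Ω, ∀ ω₂ ∈ Ω, ω₁ + ω₂ ∈ Ω)
    (hγ : PiecewiseC1On γ 0 1) (hγ₀ : γ 0 ∈ ball 0 (R / 4))
    (hγΩ : ∀ t ∈ Icc (0 : ℝ) 1, γ t ∉ Ω) : ContinuableAlong (conv f g) γ 0 1 := by
  have hR : 0 < R := by linarith [pos_of_mem_ball hγ₀]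
  obtain ⟨K, hK⟩ := hγ.exists_lipschitzOnWith
  obtain ⟨t₀, ht₀, hmin⟩ := isCompact_Icc.exists_isMinOn (nonempty_Icc.2 zero_le_one)
    ((continuous_infDist_pt Ω).comp_continuousOn hγ.1)
  have hm : 0 < infDist (γ t₀) Ω := (hcl.notMem_iff_infDist_pos hne).1 (hγΩ t₀ ht₀)
  obtain ⟨L, hL, hKm⟩ : ∃ L, 0 ≤ L ∧ K = L * infDist (γ t₀) Ω :=
    ⟨K / infDist (γ t₀) Ω, by positivity, (div_mul_cancel₀ _ hm.ne').symm⟩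
  obtain ⟨ε, κ, δ, h, hQ, hκm⟩ := exists_isQuality hR
    (Real.one_le_exp (by positivity : 0 ≤ 2 * L)) hm
  suffices ∃ φ, IsConvElementAlong Ω R f g ε κ δ h L γ 1 φ ∧ ContAlong (conv f g) γ 0 1 φ from
    this.imp fun φ hφ ↦ hφ.2
  refine Icc_forward_induction zero_le_one (P := fun t ↦ ∃ φ,
    IsConvElementAlong Ω R f g ε κ δ h L γ t φ ∧ ContAlong (conv f g) γ 0 t φ) ?_ fun t _ ↦ ?_
  · obtain ⟨φ, hφ, heq⟩ := exists_isConvElement_conv hf hg hne hcl hγ₀ hQ.delta_pos hQ.kappa_pos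
      hQ.le_eps hQ.le_div_four hQ.six_mul_le_kappa
    have hconv : AnalyticAt ℂ (conv f g) (γ 0) :=
      analyticOnNhd_conv hf.analyticOnNhd hg.analyticOnNhd _
        (ball_subset_ball (by linarith) hγ₀)
    refine ⟨φ, by simpa [IsConvElementAlong] using hφ, (contAlong_self ?_).congr_right heq.symm⟩
    simpa using hconv
  have hnear : ∀ᶠ v in 𝓝 t, K * |v - t| < δ / 2 :=
    (Continuous.tendsto' (by fun_prop) t 0 (by simp)).eventually_lt_const (half_pos hQ.delta_pos)
  refine ⟨_, inter_mem self_mem_nhdsWithin (mem_nhdsWithin_of_mem_nhds hnear),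
    fun s u hsu hV ⟨φ, hφ, hcont⟩ ↦ ?_⟩
  obtain ⟨hs, hst⟩ := hV (left_mem_Icc.2 hsu)
  obtain ⟨hu, hut⟩ := hV (right_mem_Icc.2 hsu)
  have hKδ : K * (u - s) ≤ δ := calc
    K * (u - s) ≤ K * (|u - t| + |s - t|) := by
      gcongr
      linarith [le_abs_self (u - t), neg_abs_le (s - t)]
    _ ≤ δ := by linarith [hst.out, hut.out]
  obtain ⟨φ', hφ', hcont'⟩ :=
    hφ.exists_contAlong hQ hf hg hne hcl hadd hK (fun v hv ↦ hmin hv) hκm hKm hs hu hsu hKδ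
  exact ⟨φ', hφ', hcont.trans hcont' ⟨hs.1, hsu⟩⟩

end Convolution

theorem stmt2_general (Ω : Set ℂ) (hne : Ω.Nonempty) (hcl : IsClosed Ω)
    (hadd : ∀ ω₁ ∈ Ω, ∀ ω₂ ∈ Ω, ω₁ + ω₂ ∈ Ω)
    (f g : ℂ → ℂ) (hf : OmegaCont Ω f) (hg : OmegaCont Ω g) :
    OmegaCont Ω (conv f g) := by
  obtain ⟨R₁, hR₁, hf⟩ := omegaCont_iff.1 hf
  obtain ⟨R₂, hR₂, hg⟩ := omegaCont_iff.1 hg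
  have hR : 0 < min R₁ R₂ := lt_min hR₁ hR₂
  replace hf := hf.mono (min_le_left R₁ R₂)
  replace hg := hg.mono (min_le_right R₁ R₂)
  have hsub : ball (0 : ℂ) (min R₁ R₂ / 4) ⊆ ball 0 (min R₁ R₂) :=
    ball_subset_ball (by linarith)
  exact ⟨min R₁ R₂ / 4, by positivity,
    (analyticOnNhd_conv hf.analyticOnNhd hg.analyticOnNhd).mono hsub,
    fun ζ hζ ↦ hf.notMem ζ (hsub hζ),
    fun _ hγ hγ₀ _ hγΩ ↦ continuableAlong_conv hf hg hne hcl hadd hγ hγ₀ hγΩ⟩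

/-- If the non-empty closed discrete set `Ω` is stable under addition, then the
space of `Ω`-continuable germs is stable under convolution. -/
theorem stmt2 (Ω : Set ℂ) (hne : Ω.Nonempty) (hcl : IsClosed Ω)
    (hdisc : DiscreteTopology Ω)
    (hadd : ∀ ω₁ ∈ Ω, ∀ ω₂ ∈ Ω, ω₁ + ω₂ ∈ Ω)
    (f g : ℂ → ℂ) (hf : OmegaCont Ω f) (hg : OmegaCont Ω g) :
    OmegaCont Ω (conv f g) :=
  stmt2_general Ω hne hcl hadd f g hf hg
end
end

section
/- For any holomorphic germs φ̂, ψ̂ at 0 with radii of convergence r₁ and r₂ respectively, the formula (φ̂*ψ̂)(ζ) = ∫₀^ζ φ̂(ξ) ψ̂(ζ−ξ) dξ (integral over the line segment from 0 to ζ) defines a holomorphic function on the disc D_{min(r₁,r₂)}, hence a holomorphic germ at 0 whose disc of convergence contains the intersection of the discs of convergence of φ̂ and ψ̂. Moreover this convolution law is commutative and associative on ℂ{ζ}. -/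
open Set Metric Filter Topology intervalIntegral

noncomputable section

/-!
Parametrising the segment, `conv f g ζ = ζ ∫₀¹ f(tζ) g((1-t)ζ) dt`: the integrand is holomorphic in
`ζ` and its `ζ`-derivative is jointly continuous, so one may differentiate under the integral sign.
Commutativity is the substitution `t ↦ 1 - t`. Both sides of the associativity law are iterated
integrals of `f(sζ) g((t-s)ζ) h((1-t)ζ)` over the triangle `0 ≤ s ≤ t ≤ 1`, so they agree by Fubini.
-/

lemma ball_min {X : Type*} [PseudoMetricSpace X] (x : X) (r s : ℝ) :
    ball x (min r s) = ball x r ∩ ball x s := by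
  ext y
  simp only [mem_ball, mem_inter_iff, lt_min_iff]

lemma starConvex_ball {E : Type*} [SeminormedAddCommGroup E] [NormedSpace ℝ E] (x : E) {r : ℝ}
    (hr : 0 < r) : StarConvex ℝ x (ball x r) :=
  (convex_ball x r).starConvex (mem_ball_self hr)

lemma hasDerivAt_comp_const_mul_mul {𝕜 : Type*} [NontriviallyNormedField 𝕜] {f g : 𝕜 → 𝕜}
    {z c d : 𝕜} (hf : DifferentiableAt 𝕜 f (c * z)) (hg : DifferentiableAt 𝕜 g (d * z)) :
    HasDerivAt (fun w ↦ f (c * w) * g (d * w))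
      (c * (deriv f (c * z) * g (d * z)) + d * (f (c * z) * deriv g (d * z))) z := by
  refine ((hf.hasDerivAt.comp z (hasDerivAt_const_mul c)).mul
    (hg.hasDerivAt.comp z (hasDerivAt_const_mul d))).congr_deriv ?_
  simp only [Function.comp_apply]
  ring

section Integration

open MeasureTheory

variable {E : Type*} [NormedAddCommGroup E] [NormedSpace ℝ E]

lemma hasDerivAt_intervalIntegral_of_continuousOn {𝕜 : Type*} [RCLike 𝕜] [NormedSpace 𝕜 E]
    {U : Set 𝕜} (hU : IsOpen U) {a b : ℝ} {F F' : 𝕜 → ℝ → E}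
    (hF : ∀ z ∈ U, ContinuousOn (F z) (uIcc a b))
    (hF' : ContinuousOn (Function.uncurry F') (U ×ˢ uIcc a b))
    (hderiv : ∀ z ∈ U, ∀ t ∈ uIcc a b, HasDerivAt (F · t) (F' z t) z) {z : 𝕜} (hz : z ∈ U) :
    HasDerivAt (fun w ↦ ∫ t in a..b, F w t) (∫ t in a..b, F' z t) z := by
  obtain ⟨K, hK, hzK, hKU⟩ := exists_compact_subset hU hz
  obtain ⟨C, hC⟩ := (hK.prod isCompact_uIcc).exists_bound_of_continuousOn
    (hF'.mono (prod_mono_left hKU))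
  have hF'z : ContinuousOn (F' z) (uIcc a b) := hF'.uncurry_left z hz
  refine (intervalIntegral.hasDerivAt_integral_of_dominated_loc_of_deriv_le (bound := fun _ ↦ C)
    (isOpen_interior.mem_nhds hzK) ?_ (hF z hz).intervalIntegrable
    hF'z.intervalIntegrable.aestronglyMeasurable_restrict_uIoc ?_ intervalIntegrable_const ?_).2
  · filter_upwards [hU.mem_nhds hz] with w hw
    exact (hF w hw).intervalIntegrable.aestronglyMeasurable_restrict_uIoc
  · exact .of_forall fun t ht w hw ↦ hC (w, t) ⟨interior_subset hw, uIoc_subset_uIcc ht⟩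
  · exact .of_forall fun t ht w hw ↦
      hderiv w (hKU (interior_subset hw)) t (uIoc_subset_uIcc ht)

/-- The triangle of pairs `(s, t)` with `a ≤ s ≤ t ≤ b`, the domain of the double integrals that
arise from iterated convolutions. -/
def orderedPairs (a b : ℝ) : Set (ℝ × ℝ) :=
  {p | a ≤ p.1 ∧ p.1 ≤ p.2 ∧ p.2 ≤ b}

lemma isCompact_orderedPairs (a b : ℝ) : IsCompact (orderedPairs a b) := by
  refine (isCompact_Icc (a := (a, a)) (b := (b, b))).of_isClosed_subset ?_ ?_
  · exact (isClosed_le continuous_const continuous_fst).inter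
      ((isClosed_le continuous_fst continuous_snd).inter
        (isClosed_le continuous_snd continuous_const))
  · exact fun p ⟨ha, hp, hb⟩ ↦ ⟨⟨ha, ha.trans hp⟩, ⟨hp.trans hb, hb⟩⟩

lemma intervalIntegral_eq_integral_indicator_Icc {a b : ℝ} (hab : a ≤ b) (f : ℝ → E) :
    ∫ t in a..b, f t = ∫ t, (Icc a b).indicator f t := by
  rw [integral_of_le hab, ← integral_Icc_eq_integral_Ioc,
    MeasureTheory.integral_indicator measurableSet_Icc]

lemma intervalIntegral_intervalIntegral_swap_orderedPairs {a b : ℝ} (hab : a ≤ b) {f : ℝ → ℝ → E}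
    (hf : IntegrableOn (Function.uncurry f) (orderedPairs a b)) :
    ∫ t in a..b, ∫ s in a..t, f s t = ∫ s in a..b, ∫ t in s..b, f s t := by
  set T := orderedPairs a b
  have slice_left (s : ℝ) : (Icc a b).indicator (fun s ↦ ∫ t in s..b, f s t) s =
      ∫ t, T.indicator (Function.uncurry f) (s, t) := by
    by_cases hs : s ∈ Icc a b
    · rw [indicator_of_mem hs, intervalIntegral_eq_integral_indicator_Icc hs.2]
      simp [T, orderedPairs, indicator, hs.1]
    · have hT (t : ℝ) : (s, t) ∉ T := fun ht ↦ hs ⟨ht.1, ht.2.1.trans ht.2.2⟩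
      simp [hs, hT]
  have slice_right (t : ℝ) : (Icc a b).indicator (fun t ↦ ∫ s in a..t, f s t) t =
      ∫ s, T.indicator (Function.uncurry f) (s, t) := by
    by_cases ht : t ∈ Icc a b
    · rw [indicator_of_mem ht, intervalIntegral_eq_integral_indicator_Icc ht.1]
      simp [T, orderedPairs, indicator, ht.2]
    · have hT (s : ℝ) : (s, t) ∉ T := fun hs ↦ ht ⟨hs.1.trans hs.2.1, hs.2.2⟩
      simp [ht, hT]
  have integrable_indicator : Integrable
      (Function.uncurry fun s t ↦ T.indicator (Function.uncurry f) (s, t)) :=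
    hf.integrable_indicator (isCompact_orderedPairs a b).measurableSet
  rw [intervalIntegral_eq_integral_indicator_Icc hab,
    intervalIntegral_eq_integral_indicator_Icc hab]
  simp_rw [slice_left, slice_right]
  exact (integral_integral_swap integrable_indicator).symm

end Integration

section Convolution

variable {f g h : ℂ → ℂ}

lemma ofReal_mul_mem_segment {t : ℝ} (ht : t ∈ Icc (0 : ℝ) 1) (z : ℂ) :
    (t : ℂ) * z ∈ segment ℝ 0 z := by
  rw [segment_eq_image]
  exact ⟨t, ht, by simp⟩

lemma one_sub_ofReal_mul_mem_segment {t : ℝ} (ht : t ∈ Icc (0 : ℝ) 1) (z : ℂ) :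
    (1 - (t : ℂ)) * z ∈ segment ℝ 0 z :=
  mod_cast ofReal_mul_mem_segment (Icc.one_sub_mem ht) z

lemma continuousOn_conv_integrand {S : Set ℂ} (hS : StarConvex ℝ 0 S) (hf : ContinuousOn f S)
    (hg : ContinuousOn g S) :
    ContinuousOn (Function.uncurry fun (z : ℂ) (t : ℝ) ↦ f ((t : ℂ) * z) * g ((1 - (t : ℂ)) * z))
      (S ×ˢ uIcc 0 1) := by
  rw [uIcc_of_le zero_le_one]
  refine (hf.comp (by fun_prop) fun p hp ↦ ?_).mul (hg.comp (by fun_prop) fun p hp ↦ ?_)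
  · exact hS.segment_subset hp.1 (ofReal_mul_mem_segment hp.2 p.1)
  · exact hS.segment_subset hp.1 (one_sub_ofReal_mul_mem_segment hp.2 p.1)

lemma analyticOnNhd_conv_s4 {S : Set ℂ} (hSo : IsOpen S) (hS : StarConvex ℝ 0 S)
    (hf : AnalyticOnNhd ℂ f S) (hg : AnalyticOnNhd ℂ g S) : AnalyticOnNhd ℂ (conv f g) S := by
  have hcont := continuousOn_conv_integrand hS hf.continuousOn hg.continuousOn
  have hcont_deriv : ContinuousOn (Function.uncurry fun (z : ℂ) (t : ℝ) ↦
      t * (deriv f (t * z) * g ((1 - t) * z)) + (1 - t) * (f (t * z) * deriv g ((1 - t) * z)))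
      (S ×ˢ uIcc 0 1) :=
    (ContinuousOn.mul (by fun_prop)
        (continuousOn_conv_integrand hS hf.deriv.continuousOn hg.continuousOn)).add
      (ContinuousOn.mul (by fun_prop)
        (continuousOn_conv_integrand hS hf.continuousOn hg.deriv.continuousOn))
  have hderiv (z : ℂ) (hz : z ∈ S) (t : ℝ) (ht : t ∈ uIcc 0 1) :
      HasDerivAt (fun w ↦ f (t * w) * g ((1 - t) * w))
        (t * (deriv f (t * z) * g ((1 - t) * z)) + (1 - t) * (f (t * z) * deriv g ((1 - t) * z)))
        z := by
    rw [uIcc_of_le zero_le_one] at ht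
    exact hasDerivAt_comp_const_mul_mul
      (hf _ (hS.segment_subset hz (ofReal_mul_mem_segment ht z))).differentiableAt
      (hg _ (hS.segment_subset hz (one_sub_ofReal_mul_mem_segment ht z))).differentiableAt
  refine DifferentiableOn.analyticOnNhd (fun ζ hζ ↦ ?_) hSo
  have hasDerivAt_integral := hasDerivAt_intervalIntegral_of_continuousOn hSo
    (fun z hz ↦ hcont.uncurry_left z hz) hcont_deriv hderiv hζ
  exact (differentiableAt_id.mul hasDerivAt_integral.differentiableAt).differentiableWithinAt

lemma conv_comm (f g : ℂ → ℂ) : conv f g = conv g f := by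
  funext ζ
  have reflect : ∫ t in (0 : ℝ)..1, f (t * ζ) * g ((1 - t) * ζ) =
      ∫ t in (0 : ℝ)..1, g (t * ζ) * f ((1 - t) * ζ) := by
    simpa [mul_comm] using integral_comp_sub_left (a := 0) (b := 1)
      (fun t : ℝ ↦ g (t * ζ) * f ((1 - t) * ζ)) 1
  rw [conv, conv, reflect]

lemma conv_ofReal_sub_mul (f g : ℂ → ℂ) (a b : ℝ) (ζ : ℂ) :
    conv f g (((b : ℂ) - a) * ζ) =
      ζ * ∫ t in a..b, f (((t : ℂ) - a) * ζ) * g (((b : ℂ) - t) * ζ) := by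
  have rescale := smul_integral_comp_add_mul (a := 0) (b := 1)
    (fun t : ℝ ↦ f (((t : ℂ) - a) * ζ) * g (((b : ℂ) - t) * ζ)) (b - a) a
  rw [mul_zero, mul_one, add_zero, add_sub_cancel] at rescale
  rw [← rescale, conv, Complex.real_smul, mul_left_comm, ← mul_assoc, Complex.ofReal_sub]
  congr 1
  refine integral_congr fun t _ ↦ ?_
  push_cast
  congr 2 <;> ring

lemma conv_conv_left (f g h : ℂ → ℂ) (ζ : ℂ) :
    conv (conv f g) h ζ = ζ ^ 2 * ∫ t in (0 : ℝ)..1, ∫ s in (0 : ℝ)..t,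
      f ((s : ℂ) * ζ) * g (((t : ℂ) - s) * ζ) * h ((1 - (t : ℂ)) * ζ) := by
  have conv_inner (t : ℝ) : conv f g ((t : ℂ) * ζ) =
      ζ * ∫ s in (0 : ℝ)..t, f ((s : ℂ) * ζ) * g (((t : ℂ) - s) * ζ) := by
    simpa using conv_ofReal_sub_mul f g 0 t ζ
  rw [conv]
  simp only [conv_inner, integral_mul_const, integral_const_mul, pow_two, mul_assoc ζ]

lemma conv_conv_right (f g h : ℂ → ℂ) (ζ : ℂ) :
    conv f (conv g h) ζ = ζ ^ 2 * ∫ s in (0 : ℝ)..1, ∫ t in s..1,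
      f ((s : ℂ) * ζ) * g (((t : ℂ) - s) * ζ) * h ((1 - (t : ℂ)) * ζ) := by
  have conv_inner (s : ℝ) : conv g h ((1 - (s : ℂ)) * ζ) =
      ζ * ∫ t in s..1, g (((t : ℂ) - s) * ζ) * h ((1 - (t : ℂ)) * ζ) := by
    simpa using conv_ofReal_sub_mul g h s 1 ζ
  rw [conv]
  simp only [conv_inner, mul_left_comm _ ζ, mul_assoc, integral_const_mul, pow_two]

lemma conv_assoc {ζ : ℂ} (hf : ContinuousOn f (segment ℝ 0 ζ))
    (hg : ContinuousOn g (segment ℝ 0 ζ)) (hh : ContinuousOn h (segment ℝ 0 ζ)) :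
    conv (conv f g) h ζ = conv f (conv g h) ζ := by
  have hcont : ContinuousOn (Function.uncurry fun s t : ℝ ↦
      f ((s : ℂ) * ζ) * g (((t : ℂ) - s) * ζ) * h ((1 - (t : ℂ)) * ζ)) (orderedPairs 0 1) := by
    refine ((hf.comp (by fun_prop) ?_).mul (hg.comp (by fun_prop) ?_)).mul
      (hh.comp (by fun_prop) ?_) <;> rintro ⟨s, t⟩ ⟨hs, hst, ht⟩ <;> dsimp only at hs hst ht ⊢
    · exact ofReal_mul_mem_segment ⟨hs, hst.trans ht⟩ ζ
    · exact mod_cast ofReal_mul_mem_segment (t := t - s) ⟨by linarith, by linarith⟩ ζ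
    · exact one_sub_ofReal_mul_mem_segment ⟨hs.trans hst, ht⟩ ζ
  rw [conv_conv_left, conv_conv_right, intervalIntegral_intervalIntegral_swap_orderedPairs
    zero_le_one (hcont.integrableOn_compact (isCompact_orderedPairs 0 1))]

end Convolution

theorem stmt4_general {f g h : ℂ → ℂ} {U V W : Set ℂ} (hUo : IsOpen U) (hVo : IsOpen V)
    (hU : StarConvex ℝ 0 U) (hV : StarConvex ℝ 0 V) (hW : StarConvex ℝ 0 W)
    (hf : AnalyticOnNhd ℂ f U) (hg : AnalyticOnNhd ℂ g V) (hh : ContinuousOn h W) :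
    AnalyticOnNhd ℂ (conv f g) (U ∩ V) ∧ conv f g = conv g f ∧
      EqOn (conv (conv f g) h) (conv f (conv g h)) (U ∩ (V ∩ W)) := by
  refine ⟨analyticOnNhd_conv_s4 (hUo.inter hVo) (hU.inter hV) (hf.mono inter_subset_left)
    (hg.mono inter_subset_right), conv_comm f g, fun ζ ⟨hζU, hζV, hζW⟩ ↦ ?_⟩
  exact conv_assoc (hf.continuousOn.mono (hU.segment_subset hζU))
    (hg.continuousOn.mono (hV.segment_subset hζV)) (hh.mono (hW.segment_subset hζW))

/-- The convolution of two holomorphic germs at `0`, with discs of convergence of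
radii `r₁` and `r₂`, is holomorphic on the disc of radius `min r₁ r₂`; moreover
convolution is commutative and associative. -/
theorem stmt4 (f g h : ℂ → ℂ) (r₁ r₂ r₃ : ℝ) (hr₁ : 0 < r₁) (hr₂ : 0 < r₂) (hr₃ : 0 < r₃)
    (hf : AnalyticOnNhd ℂ f (Metric.ball 0 r₁))
    (hg : AnalyticOnNhd ℂ g (Metric.ball 0 r₂))
    (hh : AnalyticOnNhd ℂ h (Metric.ball 0 r₃)) :
    AnalyticOnNhd ℂ (conv f g) (Metric.ball 0 (min r₁ r₂)) ∧
    (∀ ζ ∈ Metric.ball (0:ℂ) (min r₁ r₂), conv f g ζ = conv g f ζ) ∧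
    (∀ ζ ∈ Metric.ball (0:ℂ) (min r₁ (min r₂ r₃)),
      conv (conv f g) h ζ = conv f (conv g h) ζ) := by
  obtain ⟨hana, hcomm, hassoc⟩ := stmt4_general isOpen_ball isOpen_ball (starConvex_ball 0 hr₁)
    (starConvex_ball 0 hr₂) (starConvex_ball 0 hr₃) hf hg hh.continuousOn
  simp only [ball_min]
  exact ⟨hana, fun ζ _ ↦ congrFun hcomm ζ, fun ζ hζ ↦ hassoc hζ⟩
end
end
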